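/- Under hypothesis (1.0), the single-integral variational formulas hold for the ND principal eigenvalue: inf over f in the modified class F̃_I of sup_{x∈(0,D)} I(f)(x)^{-1} equals λ₀, which equals sup over f in F_I of inf_{x∈(0,D)} I(f)(x)^{-1}; moreover the supremum on the right-hand side is attained by some f ∈ F_I. -/

import Mathlib

/-!
The proof is a shooting argument. For `l ≥ 0` let `g_l` (`sol`) solve
`g'(x) = -l e^{-C(x)} ∫₀ˣ g dμ`, `g(0) = 1`; it is an entire power series in `l` whose coefficients
are iterated integrals, hence continuous in `x` and in `l`. Wherever `g_l` is positive on `(0,x)`,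
the equation says exactly that `I(g_l)(x)⁻¹ = l` (`Model.opI_inv_sol`). Two cases arise.

* `g_l > 0` on `(0,D)`. For `l > 0` it then belongs to `FI`, and `l ≤ λ₀`, because every `f ∈ FI`
  satisfies `inf I(f)⁻¹ ≤ λ₀` (`Model.lower`, by Picone's inequality and Tonelli's theorem).
* `g_l` has a first zero `z` in `(0,D)`. Then `g_l 1_{[0,z)}` has Rayleigh quotient `l`, so after a
  `C¹` truncation `λ₀ ≤ l` (`Model.lam0_le_of_firstZero`). It also belongs to `FItil`, with
  `sup I⁻¹ ≤ l` (`Model.iInf_FItil_le`).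

Thus `g_l > 0` for `0 < l < λ₀`, and continuity in `l` gives `g_{λ₀} ≥ 0`. A zero of `g_{λ₀}` would
be an interior minimum, contradicting the strict negativity of the derivative there, so
`g_{λ₀} > 0` (`Model.sol_lam0_pos`) and `g_{λ₀}` attains the supremum over `FI`. For every `l > λ₀`
the second case must occur, so the infimum over `FItil` is at most `λ₀`. Conversely, pairing
`g_{λ₀}` with `f ∈ FItil` by integration by parts gives `λ₀ ≤ sup I(f)⁻¹` (`Model.le_iSup_FItil`).
If `λ₀ = 0`, this last bound is trivial and `x ↦ e^{-x}` attains the supremum over `FI`.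
-/


open MeasureTheory Set Filter Topology ENNReal

noncomputable section

/-- The open interval `(0, D)` in `ℝ`, where `D : ℝ≥0∞` may be infinite. -/
def ooI (D : ℝ≥0∞) : Set ℝ := {x : ℝ | 0 < x ∧ ENNReal.ofReal x < D}

/-- The interval `[0, D)` in `ℝ`. -/
def coI (D : ℝ≥0∞) : Set ℝ := {x : ℝ | 0 ≤ x ∧ ENNReal.ofReal x < D}

/-- The interval `[0, D]` in `ℝ` (conventionally `[0, ∞)` when `D = ∞`). -/
def ccI (D : ℝ≥0∞) : Set ℝ := {x : ℝ | 0 ≤ x ∧ ENNReal.ofReal x ≤ D}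

/-- `C(x) = ∫_0^x b(u)/a(u) du`. -/
def Cf (a b : ℝ → ℝ) (x : ℝ) : ℝ := ∫ u in Set.Ioo 0 x, b u / a u

/-- The measure `μ(dx) = (e^{C(x)}/a(x)) dx` on `(0, D)`. -/
def muM (a b : ℝ → ℝ) (D : ℝ≥0∞) : Measure ℝ :=
  (volume.restrict (ooI D)).withDensity fun x => ENNReal.ofReal (Real.exp (Cf a b x) / a x)

/-- The measure `ν(dx) = e^{-C(x)} dx` on `(0, D)`. -/
def nuM (a b : ℝ → ℝ) (D : ℝ≥0∞) : Measure ℝ :=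
  (volume.restrict (ooI D)).withDensity fun x => ENNReal.ofReal (Real.exp (-Cf a b x))

/-- Hypothesis (1.0): `a`, `b` Borel measurable, `a > 0` on `(0,D)`, and `b/a`, `e^C/a`
locally integrable on `[0, D]`. -/
def Hyp (a b : ℝ → ℝ) (D : ℝ≥0∞) : Prop :=
  Measurable a ∧ Measurable b ∧ (∀ x ∈ ooI D, 0 < a x) ∧
    ∀ p : ℝ, 0 ≤ p → ENNReal.ofReal p ≤ D →
      IntegrableOn (fun u => b u / a u) (Set.Icc 0 p) ∧
      IntegrableOn (fun u => Real.exp (Cf a b u) / a u) (Set.Icc 0 p)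

/-- `f ∈ C¹(0,D) ∩ C[0,D]`. -/
def C1C (D : ℝ≥0∞) (f : ℝ → ℝ) : Prop :=
  ContinuousOn f (ccI D) ∧ (∀ x ∈ ooI D, DifferentiableAt ℝ f x) ∧
    ContinuousOn (deriv f) (ooI D)

/-- The Dirichlet form `D(f) = ∫_0^D e^{C} f'^2 dx`. -/
def Dform (a b : ℝ → ℝ) (D : ℝ≥0∞) (f : ℝ → ℝ) : ℝ≥0∞ :=
  ∫⁻ x in ooI D, ENNReal.ofReal (Real.exp (Cf a b x) * deriv f x ^ 2)

/-- `μ(f²)`. -/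
def muL2 (a b : ℝ → ℝ) (D : ℝ≥0∞) (f : ℝ → ℝ) : ℝ≥0∞ :=
  ∫⁻ x, ENNReal.ofReal (f x ^ 2) ∂(muM a b D)

/-- The ND (Neumann at `0`, Dirichlet at `D`) principal eigenvalue `λ₀`, defined with
compactly supported test functions. -/
def lam0 (a b : ℝ → ℝ) (D : ℝ≥0∞) : ℝ≥0∞ :=
  sInf {r | ∃ f : ℝ → ℝ, C1C D f ∧
    (∃ p : ℝ, 0 ≤ p ∧ ENNReal.ofReal p < D ∧ ∀ x, p < x → f x = 0) ∧
    (D ≠ ∞ → f D.toReal = 0) ∧ muL2 a b D f = 1 ∧ r = Dform a b D f}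

/-- The single-integral operator `I(f)(x) = -(e^{-C(x)}/f'(x)) ∫_0^x f dμ`
(valued in `ℝ≥0∞`, with the convention `1/0 = ∞`). -/
def opI (a b : ℝ → ℝ) (D : ℝ≥0∞) (f : ℝ → ℝ) (x : ℝ) : ℝ≥0∞ :=
  ENNReal.ofReal (Real.exp (-Cf a b x)) *
      (∫⁻ u in Set.Ioo 0 x, ENNReal.ofReal (f u) ∂(muM a b D)) /
    ENNReal.ofReal (-deriv f x)

/-- The class `F_I`. -/
def FI (D : ℝ≥0∞) : Set (ℝ → ℝ) :=
  {f | C1C D f ∧ (∀ x ∈ ooI D, 0 < f x) ∧ ∀ x ∈ ooI D, deriv f x < 0}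

/-- The modified class `F̃_I`. -/
def FItil (D : ℝ≥0∞) : Set (ℝ → ℝ) :=
  {f | ∃ x₀ x₁ : ℝ, 0 ≤ x₀ ∧ x₀ < x₁ ∧ ENNReal.ofReal x₁ < D ∧
    ContinuousOn f (Set.Icc x₀ x₁) ∧ (∀ x ∈ Set.Ioo x₀ x₁, DifferentiableAt ℝ f x) ∧
    ContinuousOn (deriv f) (Set.Ioo x₀ x₁) ∧ (∀ x ∈ Set.Ioo x₀ x₁, deriv f x < 0) ∧
    ∀ x : ℝ, f x = if 0 ≤ x ∧ x < x₁ then f (max x x₀) else 0}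

/-! ### The eigenvalue equation as a power series in the spectral parameter -/

/-- The iterates `Φ₀ = 1`, `Φₙ₊₁(x) = ∫₀ˣ s(t) ∫₀ᵗ Φₙ ρ du dt`. -/
def picard (ρ s : ℝ → ℝ) : ℕ → ℝ → ℝ
  | 0 => fun _ => 1
  | n + 1 => fun x => ∫ t in (0:ℝ)..x, s t * ∫ u in (0:ℝ)..t, picard ρ s n u * ρ u

/-- Coefficients of the operator extended to all of `ℝ`: a density `ρ ≥ 0`, vanishing on `(-∞,0]`
and integrable on bounded intervals, and a continuous weight `s > 0`. Here `ρ` stands for the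
density of `μ` and `s` for `e^{-C}`; see `Model`. -/
structure Weights (ρ s : ℝ → ℝ) : Prop where
  meas : Measurable ρ
  nonneg : ∀ x, 0 ≤ ρ x
  zero : ∀ x, x ≤ 0 → ρ x = 0
  int : ∀ p q : ℝ, IntervalIntegrable ρ volume p q
  spos : ∀ x, 0 < s x
  scont : Continuous s

namespace Weights
variable {ρ s : ℝ → ℝ}

theorem int_mul (W : Weights ρ s) {f : ℝ → ℝ} (hf : Continuous f) (p q : ℝ) :
    IntervalIntegrable (fun u => f u * ρ u) volume p q :=
  (W.int p q).continuousOn_mul hf.continuousOn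

theorem cont_inner (W : Weights ρ s) {f : ℝ → ℝ} (hf : Continuous f) :
    Continuous fun t => ∫ u in (0:ℝ)..t, f u * ρ u :=
  intervalIntegral.continuous_primitive (W.int_mul hf) 0

theorem inner_zero (W : Weights ρ s) (f : ℝ → ℝ) {t : ℝ} (ht : t ≤ 0) :
    ∫ u in (0:ℝ)..t, f u * ρ u = 0 := by
  rw [intervalIntegral.integral_congr (g := fun _ => (0:ℝ))]
  · simp
  · intro u hu
    rw [uIcc_of_ge ht] at hu
    simp [W.zero u hu.2]

theorem picard_cont (W : Weights ρ s) (n : ℕ) : Continuous (picard ρ s n) := by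
  induction n with
  | zero => exact continuous_const
  | succ n ih =>
    exact intervalIntegral.continuous_primitive
      (fun p q => (W.scont.mul (W.cont_inner ih)).intervalIntegrable p q) 0

theorem picard_nonpos (W : Weights ρ s) (n : ℕ) {x : ℝ} (hx : x ≤ 0) :
    picard ρ s (n + 1) x = 0 := by
  simp only [picard]
  rw [intervalIntegral.integral_congr (g := fun _ => (0:ℝ))]
  · simp
  · intro u hu
    rw [uIcc_of_ge hx] at hu
    simp [W.inner_zero _ hu.2]

theorem picard_nonneg (W : Weights ρ s) (n : ℕ) : ∀ x, 0 ≤ picard ρ s n x := by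
  induction n with
  | zero => intro x; simp [picard]
  | succ n ih =>
    intro x
    rcases le_total x 0 with hx | hx
    · rw [W.picard_nonpos n hx]
    · apply intervalIntegral.integral_nonneg hx
      intro t ht
      apply mul_nonneg (W.spos t).le
      apply intervalIntegral.integral_nonneg ht.1
      intro u _
      exact mul_nonneg (ih u) (W.nonneg u)

/-- Locally uniform factorial decay of the iterates, which makes the power series converge for
every value of the parameter. -/
theorem picard_bound (W : Weights ρ s) (R : ℝ) : ∃ K, 0 ≤ K ∧ ∀ n, ∀ x, 0 ≤ x → x ≤ R →
    picard ρ s n x ≤ (K * x) ^ n / n.factorial := by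
  obtain ⟨S, hS⟩ := (isCompact_Icc (a := (0:ℝ)) (b := R)).bddAbove_image W.scont.continuousOn
  have hS' : ∀ t, 0 ≤ t → t ≤ R → s t ≤ S := fun t h0 h1 => hS ⟨t, ⟨h0, h1⟩, rfl⟩
  rcases lt_or_ge R 0 with hR | hR
  · exact ⟨0, le_rfl, fun n x h0 h1 => absurd (h0.trans h1) (not_le.2 hR)⟩
  -- With `s ≤ S` on `[0,R]` and `P = ∫₀ᴿ ρ`, each iteration gains a factor `S P` and one
  -- integration of `t ^ n`.
  set P := ∫ u in (0:ℝ)..R, ρ u with hP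
  have hP0 : 0 ≤ P := intervalIntegral.integral_nonneg hR fun u _ => W.nonneg u
  have hS0 : 0 ≤ S := (W.spos 0).le.trans (hS' 0 le_rfl hR)
  refine ⟨S * P, by positivity, fun n => ?_⟩
  induction n with
  | zero => intro x _ _; simp [picard]
  | succ n ih =>
    intro x h0 h1
    have hin : ∀ t ∈ Icc (0:ℝ) x, s t * ∫ u in (0:ℝ)..t, picard ρ s n u * ρ u ≤
        (S * P) ^ (n + 1) / n.factorial * t ^ n := by
      intro t ht
      have htR : t ≤ R := ht.2.trans h1
      have h2 : ∫ u in (0:ℝ)..t, picard ρ s n u * ρ u ≤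
          ∫ u in (0:ℝ)..t, ((S * P) * t) ^ n / n.factorial * ρ u := by
        apply intervalIntegral.integral_mono_on ht.1 (W.int_mul (W.picard_cont n) _ _)
          ((W.int _ _).const_mul _)
        intro u hu
        apply mul_le_mul_of_nonneg_right _ (W.nonneg u)
        refine (ih u hu.1 (hu.2.trans htR)).trans ?_
        have := hu.1
        have := hu.2
        gcongr
      have h3 : ∫ u in (0:ℝ)..t, ρ u ≤ P := by
        apply intervalIntegral.integral_mono_interval le_rfl ht.1 htR
        · exact ae_of_all _ W.nonneg
        · exact W.int _ _
      rw [intervalIntegral.integral_const_mul] at h2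
      have ht0 := ht.1
      have h4 : 0 ≤ ∫ u in (0:ℝ)..t, ρ u :=
        intervalIntegral.integral_nonneg ht.1 fun u _ => W.nonneg u
      have h5 : 0 ≤ ∫ u in (0:ℝ)..t, picard ρ s n u * ρ u :=
        intervalIntegral.integral_nonneg ht.1
          fun u _ => mul_nonneg (W.picard_nonneg n u) (W.nonneg u)
      calc s t * ∫ u in (0:ℝ)..t, picard ρ s n u * ρ u
          ≤ S * (((S * P) * t) ^ n / n.factorial * P) := by
            apply mul_le_mul (hS' t ht.1 htR) _ h5 hS0
            exact h2.trans (by gcongr)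
        _ = _ := by ring
    calc picard ρ s (n + 1) x ≤ ∫ t in (0:ℝ)..x, (S * P) ^ (n + 1) / n.factorial * t ^ n := by
          apply intervalIntegral.integral_mono_on h0 _ _ hin
          · exact (W.scont.mul (W.cont_inner (W.picard_cont n))).intervalIntegrable _ _
          · exact Continuous.intervalIntegrable (by fun_prop) _ _
      _ = _ := by
          rw [intervalIntegral.integral_const_mul, integral_pow, Nat.factorial_succ, mul_pow]
          push_cast
          rw [mul_pow (S * P), zero_pow (Nat.succ_ne_zero n)]
          field_simp
          ring

/-- A summable majorant of the series defining `sol`, uniform in `x` on half-lines bounded above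
and in `l` on bounded sets. -/
theorem picard_summable (W : Weights ρ s) (R L : ℝ) : ∃ B : ℕ → ℝ, Summable B ∧
    ∀ n x l, x ≤ R → |l| ≤ L → ‖(-l) ^ n * picard ρ s n x‖ ≤ B n := by
  obtain ⟨K, hK, hb⟩ := W.picard_bound (max R 0)
  refine ⟨fun n => (|L| * (K * max R 0)) ^ n / n.factorial,
    Real.summable_pow_div_factorial _, fun n x l hx hl => ?_⟩
  have h1 : picard ρ s n x ≤ (K * max R 0) ^ n / n.factorial := by
    rcases le_total 0 x with h0 | h0
    · refine (hb n x h0 (hx.trans (le_max_left _ _))).trans ?_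
      have : x ≤ max R 0 := hx.trans (le_max_left _ _)
      gcongr
    · cases n with
      | zero => simp [picard]
      | succ n => rw [W.picard_nonpos n h0]; positivity
  rw [norm_mul, norm_pow, norm_neg, Real.norm_eq_abs, Real.norm_eq_abs,
    abs_of_nonneg (W.picard_nonneg n x)]
  simp only [mul_pow |L|, mul_div_assoc]
  have : |l| ≤ |L| := hl.trans (le_abs_self _)
  exact mul_le_mul (pow_le_pow_left₀ (abs_nonneg _) this n) h1 (W.picard_nonneg n x) (by positivity)

/-- The solution `g_l = ∑ₙ (-l)ⁿ Φₙ` of `g' = -l s ∫₀ˣ g ρ`, `g(0) = 1`. -/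
def _root_.sol (ρ s : ℝ → ℝ) (l x : ℝ) : ℝ := ∑' n, (-l) ^ n * picard ρ s n x

theorem sol_hasSum (W : Weights ρ s) (l x : ℝ) :
    HasSum (fun n => (-l) ^ n * picard ρ s n x) (sol ρ s l x) := by
  obtain ⟨B, hB, h⟩ := W.picard_summable x |l|
  exact (Summable.of_norm_bounded hB fun n => h n x l le_rfl le_rfl).hasSum

theorem sol_cont (W : Weights ρ s) (l : ℝ) : Continuous (sol ρ s l) := by
  rw [continuous_iff_continuousAt]
  intro x
  obtain ⟨B, hB, h⟩ := W.picard_summable (x + 1) |l|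
  have : ContinuousOn (sol ρ s l) (Iic (x + 1)) :=
    continuousOn_tsum (fun n => (continuous_const.mul (W.picard_cont n)).continuousOn) hB
      fun n y hy => h n y l hy le_rfl
  exact this.continuousAt (Iic_mem_nhds (by linarith))

theorem sol_cont_param (W : Weights ρ s) (x : ℝ) : Continuous fun l => sol ρ s l x := by
  rw [continuous_iff_continuousAt]
  intro l
  obtain ⟨B, hB, h⟩ := W.picard_summable x (|l| + 1)
  have : ContinuousOn (fun l => sol ρ s l x) {m | |m| ≤ |l| + 1} :=
    continuousOn_tsum (fun n => Continuous.continuousOn (by fun_prop)) hB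
      fun n m hm => h n x m le_rfl hm
  refine this.continuousAt ?_
  have : {m : ℝ | |m| < |l| + 1} ∈ 𝓝 l :=
    (isOpen_lt continuous_abs continuous_const).mem_nhds (by simp)
  exact mem_of_superset this fun m hm => le_of_lt (Set.mem_ofPred.1 hm)

theorem sol_zero (W : Weights ρ s) (l : ℝ) : sol ρ s l 0 = 1 := by
  have : ∀ n ≠ 0, (-l) ^ n * picard ρ s n 0 = 0 := by
    intro n hn
    obtain ⟨m, rfl⟩ := Nat.exists_eq_succ_of_ne_zero hn
    rw [W.picard_nonpos m le_rfl, mul_zero]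
  rw [sol, tsum_eq_single 0 this]
  simp [picard]

/-- Termwise integration of a dominated series of functions against an integrable weight. -/
theorem _root_.hasSum_int {F : ℕ → ℝ → ℝ} {f k : ℝ → ℝ} {B : ℕ → ℝ} {t : ℝ}
    (hF : ∀ n, Continuous (F n)) (hB : Summable B) (ht : 0 ≤ t)
    (hb : ∀ n u, u ≤ t → ‖F n u‖ ≤ B n) (hf : ∀ u, HasSum (fun n => F n u) (f u))
    (hk : IntervalIntegrable k volume 0 t) :
    HasSum (fun n => ∫ u in (0:ℝ)..t, F n u * k u) (∫ u in (0:ℝ)..t, f u * k u) := by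
  apply intervalIntegral.hasSum_integral_of_dominated_convergence (fun n u => B n * ‖k u‖)
  · intro n
    have := hk.continuousOn_mul (hF n).continuousOn
    exact this.def'.aestronglyMeasurable
  · intro n
    refine ae_of_all _ fun u hu => ?_
    rw [uIoc_of_le ht] at hu
    rw [norm_mul]
    exact mul_le_mul_of_nonneg_right (hb n u hu.2) (norm_nonneg _)
  · exact ae_of_all _ fun u _ => hB.mul_right _
  · simp_rw [tsum_mul_right]
    exact hk.norm.const_mul _
  · exact ae_of_all _ fun u _ => (hf u).mul_right _

/-- The integral form of the equation, by termwise integration. It is only claimed for `x ≥ 0`;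
on the negative axis `sol` is constantly `1`. -/
theorem sol_eq (W : Weights ρ s) (l x : ℝ) (hx : 0 ≤ x) :
    sol ρ s l x = 1 - l * ∫ t in (0:ℝ)..x, s t * ∫ u in (0:ℝ)..t, sol ρ s l u * ρ u := by
  obtain ⟨B, hB, hb⟩ := W.picard_summable x |l|
  have h1 : ∀ t, 0 ≤ t → t ≤ x →
      HasSum (fun n => ∫ u in (0:ℝ)..t, ((-l) ^ n * picard ρ s n u) * ρ u)
      (∫ u in (0:ℝ)..t, sol ρ s l u * ρ u) := fun t h0 ht =>
    hasSum_int (fun n => continuous_const.mul (W.picard_cont n)) hB h0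
      (fun n u hu => hb n u l (hu.trans ht) le_rfl) (W.sol_hasSum l) (W.int _ _)
  have h2 : HasSum (fun n => ∫ t in (0:ℝ)..x,
        s t * ∫ u in (0:ℝ)..t, ((-l) ^ n * picard ρ s n u) * ρ u)
      (∫ t in (0:ℝ)..x, s t * ∫ u in (0:ℝ)..t, sol ρ s l u * ρ u) := by
    have hc : ∀ n, Continuous fun t => s t * ∫ u in (0:ℝ)..t, ((-l) ^ n * picard ρ s n u) * ρ u :=
      fun n => W.scont.mul (W.cont_inner (continuous_const.mul (W.picard_cont n)))
    have hP : ∀ t, 0 ≤ t → t ≤ x → ∀ n,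
        ‖∫ u in (0:ℝ)..t, ((-l) ^ n * picard ρ s n u) * ρ u‖ ≤ B n * ∫ u in (0:ℝ)..x, ρ u := by
      intro t h0 ht n
      have hB0 : 0 ≤ B n := (norm_nonneg _).trans (hb n x l le_rfl le_rfl)
      refine (intervalIntegral.norm_integral_le_of_norm_le (g := fun u => B n * ρ u) h0
        (ae_of_all _ fun u hu => ?_) ((W.int _ _).const_mul _)).trans ?_
      · rw [norm_mul, Real.norm_eq_abs (ρ u), abs_of_nonneg (W.nonneg u)]
        exact mul_le_mul_of_nonneg_right (hb n u l (hu.2.trans ht) le_rfl) (W.nonneg u)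
      · rw [intervalIntegral.integral_const_mul]
        apply mul_le_mul_of_nonneg_left _ hB0
        apply intervalIntegral.integral_mono_interval le_rfl h0 ht
        · exact ae_of_all _ W.nonneg
        · exact W.int _ _
    apply intervalIntegral.hasSum_integral_of_dominated_convergence
      (fun n t => s t * (B n * ∫ u in (0:ℝ)..x, ρ u))
    · intro n
      exact (hc n).aestronglyMeasurable
    · intro n
      refine ae_of_all _ fun t ht => ?_
      rw [uIoc_of_le hx] at ht
      rw [norm_mul, Real.norm_eq_abs (s t), abs_of_pos (W.spos t)]
      exact mul_le_mul_of_nonneg_left (hP t ht.1.le ht.2 n) (W.spos t).le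
    · exact ae_of_all _ fun t _ => (hB.mul_right _).mul_left _
    · simp_rw [tsum_mul_left]
      exact (W.scont.mul continuous_const).intervalIntegrable _ _
    · refine ae_of_all _ fun t ht => ?_
      rw [uIoc_of_le hx] at ht
      exact (h1 t ht.1.le ht.2).mul_left _
  have h3 := (W.sol_hasSum l x)
  have h4 : HasSum (fun n => (-l) ^ (n + 1) * picard ρ s (n + 1) x)
      (-l * ∫ t in (0:ℝ)..x, s t * ∫ u in (0:ℝ)..t, sol ρ s l u * ρ u) := by
    have e : (fun n => (-l) ^ (n + 1) * picard ρ s (n + 1) x) = fun n => -l * ∫ t in (0:ℝ)..x,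
        s t * ∫ u in (0:ℝ)..t, ((-l) ^ n * picard ρ s n u) * ρ u := by
      funext n
      simp only [picard, mul_assoc, intervalIntegral.integral_const_mul, mul_left_comm (s _)]
      ring
    rw [e]
    exact h2.mul_left (-l)
  have h5 := (hasSum_nat_add_iff' 1).2 h3
  have := h4.unique h5
  simp [picard] at this
  linarith

theorem sol_hasDerivAt (W : Weights ρ s) (l x : ℝ) (hx : 0 < x) :
    HasDerivAt (sol ρ s l) (-(l * s x * ∫ u in (0:ℝ)..x, sol ρ s l u * ρ u)) x := by
  have hc : Continuous fun t => s t * ∫ u in (0:ℝ)..t, sol ρ s l u * ρ u :=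
    W.scont.mul (W.cont_inner (W.sol_cont l))
  have h1 := ((hc.integral_hasStrictDerivAt 0 x).hasDerivAt.const_mul l).const_sub 1
  have h2 : sol ρ s l =ᶠ[𝓝 x]
      fun x => 1 - l * ∫ t in (0:ℝ)..x, s t * ∫ u in (0:ℝ)..t, sol ρ s l u * ρ u := by
    filter_upwards [Ioi_mem_nhds hx] with y hy using W.sol_eq l y (le_of_lt hy)
  rw [mul_assoc]
  exact h1.congr_of_eventuallyEq h2

end Weights

/-! ### Integration against `μ` and the intervals `(0, D)` -/

/-- The measure `ρ(x) dx`. -/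
def mu (ρ : ℝ → ℝ) : Measure ℝ := volume.withDensity fun x => ENNReal.ofReal (ρ x)

/-- The fundamental theorem of calculus for a decreasing function, with the derivative only known
inside the interval; monotonicity supplies its integrability. -/
theorem ftc_lintegral {f f' : ℝ → ℝ} {p q : ℝ} (hpq : p ≤ q) (hc : ContinuousOn f (Icc p q))
    (hd : ∀ x ∈ Ioo p q, HasDerivAt f (f' x) x) (hn : ∀ x ∈ Ioo p q, f' x ≤ 0) :
    ∫⁻ x in Ioo p q, ENNReal.ofReal (-f' x) = ENNReal.ofReal (f p - f q) := by
  have hi : IntegrableOn (fun x => -f' x) (Ioc p q) :=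
    intervalIntegral.integrableOn_deriv_of_nonneg (g := fun x => -f x) hc.neg
      (fun x hx => (hd x hx).neg) (fun x hx => neg_nonneg.2 (hn x hx))
  have h1 : ∫ x in p..q, -f' x = -f q - -f p :=
    intervalIntegral.integral_eq_sub_of_hasDerivAt_of_le hpq hc.neg (fun x hx => (hd x hx).neg)
      ((intervalIntegrable_iff_integrableOn_Ioc_of_le hpq).2 hi)
  rw [intervalIntegral.integral_of_le hpq, integral_Ioc_eq_integral_Ioo] at h1
  rw [← ofReal_integral_eq_lintegral_ofReal (hi.mono_set Ioo_subset_Ioc_self), h1]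
  · congr 1; ring
  · exact (ae_restrict_iff' measurableSet_Ioo).2
      (ae_of_all _ fun x hx => neg_nonneg.2 (hn x hx))

namespace Weights
variable {ρ s : ℝ → ℝ}

/-- Expansion of the density of `mu ρ`; no measurability of `F` is needed because the density is
finite. -/
theorem lint_mu (W : Weights ρ s) (F : ℝ → ℝ≥0∞) {S : Set ℝ} (hS : MeasurableSet S) :
    ∫⁻ x in S, F x ∂(mu ρ) = ∫⁻ x in S, ENNReal.ofReal (ρ x) * F x := by
  rw [mu, restrict_withDensity hS, lintegral_withDensity_eq_lintegral_mul_non_measurable]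
  · rfl
  · exact W.meas.ennreal_ofReal
  · exact ae_of_all _ fun x => ENNReal.ofReal_lt_top

theorem mu_restrict (W : Weights ρ s) (F : ℝ → ℝ≥0∞) (x : ℝ) :
    ∫⁻ u in Iio x, F u ∂(mu ρ) = ∫⁻ u in Ioo 0 x, F u ∂(mu ρ) := by
  rw [W.lint_mu _ measurableSet_Iio, W.lint_mu _ measurableSet_Ioo, ← lintegral_indicator measurableSet_Iio,
    ← lintegral_indicator measurableSet_Ioo]
  congr 1
  ext u
  by_cases h : u ≤ 0
  · simp [indicator, W.zero u h]
  · simp [indicator, not_le.1 h]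

/-- Tonelli's theorem on the triangle `0 < u < x`. -/
theorem tonelli (W : Weights ρ s) {F V : ℝ → ℝ≥0∞} (hF : Measurable F) (hV : Measurable V) :
    ∫⁻ u, F u * (∫⁻ x in Ioi u, V x) ∂(mu ρ) = ∫⁻ x, V x * ∫⁻ u in Ioo 0 x, F u ∂(mu ρ) := by
  have : SFinite (mu ρ) := by unfold mu; infer_instance
  have hm : MeasurableSet {p : ℝ × ℝ | p.1 < p.2} := measurableSet_lt measurable_fst measurable_snd
  calc ∫⁻ u, F u * (∫⁻ x in Ioi u, V x) ∂(mu ρ)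
      = ∫⁻ u, (∫⁻ x, {p : ℝ × ℝ | p.1 < p.2}.indicator (fun p => F p.1 * V p.2) (u, x)) ∂(mu ρ) := by
        congr 1
        ext u
        rw [← lintegral_indicator measurableSet_Ioi,
          ← lintegral_const_mul _ (hV.indicator measurableSet_Ioi)]
        congr 1
        ext x
        by_cases h : u < x <;> simp [indicator, h]
    _ = ∫⁻ x, ∫⁻ u, {p : ℝ × ℝ | p.1 < p.2}.indicator (fun p => F p.1 * V p.2) (u, x) ∂(mu ρ) := by
        rw [lintegral_lintegral_swap]
        exact (Measurable.indicator ((hF.comp measurable_fst).mul (hV.comp measurable_snd))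
          hm).aemeasurable
    _ = _ := by
        congr 1
        ext x
        rw [← W.mu_restrict, ← lintegral_indicator measurableSet_Iio,
          ← lintegral_const_mul _ (hF.indicator measurableSet_Iio)]
        congr 1
        ext u
        by_cases h : u < x <;> simp [indicator, h, mul_comm]

theorem lint_inner (W : Weights ρ s) {f : ℝ → ℝ} (hf : Continuous f) {x : ℝ} (hx : 0 ≤ x)
    (h0 : ∀ u ∈ Ioo 0 x, 0 ≤ f u) :
    ∫⁻ u in Ioo 0 x, ENNReal.ofReal (f u) ∂(mu ρ) = ENNReal.ofReal (∫ u in (0:ℝ)..x, f u * ρ u) := by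
  have hi := W.int_mul hf 0 x
  rw [intervalIntegrable_iff_integrableOn_Ioo_of_le hx] at hi
  rw [W.lint_mu _ measurableSet_Ioo, intervalIntegral.integral_of_le hx,
    integral_Ioc_eq_integral_Ioo, ofReal_integral_eq_lintegral_ofReal hi]
  · apply setLIntegral_congr_fun measurableSet_Ioo
    intro u hu
    simp only
    rw [mul_comm, ENNReal.ofReal_mul (h0 u hu)]
  · exact (ae_restrict_iff' measurableSet_Ioo).2
      (ae_of_all _ fun u hu => mul_nonneg (h0 u hu) (W.nonneg u))

theorem mu_Ioo (W : Weights ρ s) {x : ℝ} (hx : 0 ≤ x) :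
    mu ρ (Ioo 0 x) = ENNReal.ofReal (∫ u in (0:ℝ)..x, ρ u) := by
  have := W.lint_inner (f := fun _ => 1) continuous_const hx (fun _ _ => zero_le_one)
  simpa using this

theorem lint_lt_top (W : Weights ρ s) {F : ℝ → ℝ≥0∞} {x : ℝ} (K : ℝ)
    (h : ∀ u ∈ Ioo 0 x, F u ≤ ENNReal.ofReal K) :
    ∫⁻ u in Ioo 0 x, F u ∂(mu ρ) < ∞ := by
  rcases le_total x 0 with hx | hx
  · simp [Ioo_eq_empty (not_lt.2 hx)]
  calc _ ≤ ∫⁻ u in Ioo 0 x, ENNReal.ofReal K ∂(mu ρ) := setLIntegral_mono measurable_const h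
    _ < ∞ := by
      rw [setLIntegral_const, W.mu_Ioo hx]
      exact ENNReal.mul_lt_top ENNReal.ofReal_lt_top ENNReal.ofReal_lt_top

theorem mu_Ioo_pos (W : Weights ρ s) {x : ℝ} (hx : 0 < x) (hρ : ∀ u ∈ Ioo 0 x, 0 < ρ u) :
    0 < mu ρ (Ioo 0 x) := by
  rw [W.mu_Ioo hx.le, ENNReal.ofReal_pos]
  exact intervalIntegral.intervalIntegral_pos_of_pos_on (W.int _ _) hρ hx

/-- An integral over `(0,x)` against `mu ρ` is positive when the integrand is bounded below. -/
theorem lint_pos (W : Weights ρ s) {F : ℝ → ℝ≥0∞} {x k : ℝ} (hx : 0 < x)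
    (hρ : ∀ u ∈ Ioo 0 x, 0 < ρ u) (hk : 0 < k)
    (h : ∀ u ∈ Ioo 0 x, ENNReal.ofReal k ≤ F u) :
    0 < ∫⁻ u in Ioo 0 x, F u ∂(mu ρ) := by
  calc 0 < ∫⁻ u in Ioo 0 x, ENNReal.ofReal k ∂(mu ρ) := by
        rw [setLIntegral_const]
        exact ENNReal.mul_pos (ENNReal.ofReal_pos.2 hk).ne' (W.mu_Ioo_pos hx hρ).ne'
    _ ≤ _ := setLIntegral_mono' measurableSet_Ioo h

end Weights

theorem ooI_meas (D : ℝ≥0∞) : MeasurableSet (ooI D) := by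
  unfold ooI
  exact (measurableSet_lt measurable_const measurable_id).inter
    (measurableSet_lt ENNReal.measurable_ofReal measurable_const)

theorem ooI_open (D : ℝ≥0∞) : IsOpen (ooI D) :=
  (isOpen_lt continuous_const continuous_id).inter
    (isOpen_lt ENNReal.continuous_ofReal continuous_const)

theorem ooI_down {D : ℝ≥0∞} {x u : ℝ} (hx : x ∈ ooI D) (h0 : 0 < u) (hu : u ≤ x) : u ∈ ooI D :=
  ⟨h0, (ENNReal.ofReal_le_ofReal hu).trans_lt hx.2⟩

theorem ooI_up {D : ℝ≥0∞} {x : ℝ} (hx : ENNReal.ofReal x < D) : ∃ y ∈ ooI D, x < y := by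
  rcases eq_or_ne D ∞ with rfl | hD
  · exact ⟨max x 0 + 1, ⟨by positivity, ENNReal.ofReal_lt_top⟩,
      (le_max_left _ _).trans_lt (lt_add_one _)⟩
  · have h1 : max x 0 < D.toReal := by
      have := (ENNReal.ofReal_lt_iff_lt_toReal (le_max_right x 0) hD).1
      apply this
      rcases le_total x 0 with h | h
      · rw [max_eq_right h]; rw [ENNReal.ofReal_of_nonpos h] at hx; simpa using hx
      · rwa [max_eq_left h]
    obtain ⟨y, hy1, hy2⟩ := exists_between h1
    have hy0 : 0 < y := (le_max_right _ _).trans_lt hy1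
    exact ⟨y, ⟨hy0, (ENNReal.ofReal_lt_iff_lt_toReal hy0.le hD).2 hy2⟩,
      (le_max_left _ _).trans_lt hy1⟩

/-- The weights `ρ, s` describe the operator: `μ = ρ dx` and `s = e^{-C}` on `(0,D)`. -/
structure Model (a b : ℝ → ℝ) (D : ℝ≥0∞) (ρ s : ℝ → ℝ) : Prop extends Weights ρ s where
  rpos : ∀ x ∈ ooI D, 0 < ρ x
  rzero : ∀ x, x ∉ ooI D → ρ x = 0
  mu_eq : muM a b D = mu ρ
  exp_neg : ∀ x ∈ ooI D, Real.exp (-Cf a b x) = s x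
  exp_pos : ∀ x ∈ ooI D, Real.exp (Cf a b x) = (s x)⁻¹

theorem indicator_int {D : ℝ≥0∞} {F : ℝ → ℝ}
    (h : ∀ p : ℝ, 0 ≤ p → ENNReal.ofReal p ≤ D → IntegrableOn F (Icc 0 p)) (p q : ℝ) :
    IntervalIntegrable ((ooI D).indicator F) volume p q := by
  have key : ∀ p : ℝ, IntegrableOn ((ooI D).indicator F) (Iic p) := by
    intro p
    rw [IntegrableOn, integrable_indicator_iff (ooI_meas D), IntegrableOn,
      Measure.restrict_restrict (ooI_meas D)]
    rcases eq_or_ne D ∞ with rfl | hD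
    · refine (h (max p 0) (le_max_right _ _) le_top).mono_set ?_
      intro x hx
      exact ⟨hx.1.1.le, le_max_of_le_left hx.2⟩
    · refine (h D.toReal ENNReal.toReal_nonneg (by rw [ENNReal.ofReal_toReal hD])).mono_set ?_
      intro x hx
      exact ⟨hx.1.1.le, ((ENNReal.ofReal_lt_iff_lt_toReal hx.1.1.le hD).1 hx.1.2).le⟩
  rw [intervalIntegrable_iff]
  exact (key (max p q)).mono_set fun x hx => hx.2

/-- Under the integrability hypothesis the data come from weights defined on the whole line: both
densities are cut off outside `(0,D)`, so `C` is replaced by a globally continuous primitive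
agreeing with it on `(0,D)`. -/
theorem exists_model {a b : ℝ → ℝ} {D : ℝ≥0∞} (hyp : Hyp a b D) : ∃ ρ s, Model a b D ρ s := by
  obtain ⟨ha, hb, hpos, hloc⟩ := hyp
  have hC : ∀ x ∈ ooI D, Cf a b x = ∫ u in (0:ℝ)..x, (ooI D).indicator (fun u => b u / a u) u := by
    intro x hx
    rw [Cf, intervalIntegral.integral_of_le hx.1.le, integral_Ioc_eq_integral_Ioo]
    apply setIntegral_congr_fun measurableSet_Ioo
    intro u hu
    simp only
    rw [indicator_of_mem (ooI_down hx hu.1 hu.2.le)]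
  have hcc := intervalIntegral.continuous_primitive
    (indicator_int fun p h0 hp => (hloc p h0 hp).1) 0
  have hr : (ooI D).indicator (fun u => Real.exp (Cf a b u) / a u) = (ooI D).indicator (fun x =>
      Real.exp (∫ u in (0:ℝ)..x, (ooI D).indicator (fun u => b u / a u) u) / a x) := by
    apply indicator_congr
    intro x hx
    simp only [hC x hx]
  refine ⟨(ooI D).indicator fun u => Real.exp (Cf a b u) / a u,
    fun x => Real.exp (-∫ u in (0:ℝ)..x, (ooI D).indicator (fun u => b u / a u) u),
    ⟨?_, ?_, ?_, ?_, fun _ => Real.exp_pos _, by fun_prop⟩, ?_, ?_, ?_, ?_, ?_⟩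
  · rw [hr]
    exact (Measurable.div (Real.measurable_exp.comp hcc.measurable) ha).indicator (ooI_meas D)
  · exact indicator_nonneg fun x hx => (div_pos (Real.exp_pos _) (hpos x hx)).le
  · exact fun x hx => indicator_of_notMem (fun h => absurd h.1 (not_lt.2 hx)) _
  · exact indicator_int fun p h0 hp => (hloc p h0 hp).2
  · intro x hx
    rw [indicator_of_mem hx]
    exact div_pos (Real.exp_pos _) (hpos x hx)
  · exact fun x hx => indicator_of_notMem hx _
  · rw [muM, mu, ← withDensity_indicator (ooI_meas D)]
    congr 1
    ext x
    by_cases h : x ∈ ooI D <;> simp [h]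
  · intro x hx
    rw [hC x hx]
  · intro x hx
    rw [hC x hx, Real.exp_neg, inv_inv]

/-! ### Lower bounds for `λ₀` from trial functions in `FI` -/

/-- A function in `C¹(0,D)` is Borel on `(0,D)`. It may be arbitrary elsewhere, so only its
restriction to `(0,D)` is claimed to be measurable. -/
theorem C1C.meas {D : ℝ≥0∞} {f : ℝ → ℝ} (hf : C1C D f) :
    Measurable ((ooI D).indicator fun x => ENNReal.ofReal (f x)) := by
  classical
  have h : Measurable ((ooI D).piecewise f (fun _ => 0)) :=
    ContinuousOn.measurable_piecewise (fun x hx => (hf.2.1 x hx).continuousAt.continuousWithinAt)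
      continuousOn_const (ooI_meas D)
  have e : ((ooI D).indicator fun x => ENNReal.ofReal (f x)) =
      fun x => ENNReal.ofReal ((ooI D).piecewise f (fun _ => 0) x) := by
    ext x
    by_cases hx : x ∈ ooI D <;> simp [hx]
  rw [e]
  exact h.ennreal_ofReal

/-- The Rayleigh inequality `λ₀ μ(h²) ≤ D(h)` without normalization of `h`. -/
theorem lam0_mul_le {a b : ℝ → ℝ} {D : ℝ≥0∞} {h : ℝ → ℝ} (hC : C1C D h)
    (hp : ∃ p : ℝ, 0 ≤ p ∧ ENNReal.ofReal p < D ∧ ∀ x, p < x → h x = 0)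
    (hfin : muL2 a b D h ≠ ∞) :
    lam0 a b D * muL2 a b D h ≤ Dform a b D h := by
  rcases eq_or_ne (muL2 a b D h) 0 with h0 | h0
  · simp [h0]
  set N := (muL2 a b D h).toReal with hN
  have hNpos : 0 < N := ENNReal.toReal_pos h0 hfin
  have hNe : muL2 a b D h = ENNReal.ofReal N := (ENNReal.ofReal_toReal hfin).symm
  set k := (Real.sqrt N)⁻¹ with hk
  have hk2 : k ^ 2 = N⁻¹ := by rw [hk, inv_pow, Real.sq_sqrt hNpos.le]
  have hkN : ENNReal.ofReal (k ^ 2) * ENNReal.ofReal N = 1 := by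
    rw [hk2, ← ENNReal.ofReal_mul (by positivity), inv_mul_cancel₀ hNpos.ne', ENNReal.ofReal_one]
  have hder : ∀ x ∈ ooI D, deriv (fun x => k * h x) x = k * deriv h x := fun x hx =>
    deriv_const_mul k (hC.2.1 x hx)
  have hmem : lam0 a b D ≤ Dform a b D fun x => k * h x := by
    apply sInf_le
    obtain ⟨p, hp0, hpD, hpz⟩ := hp
    refine ⟨fun x => k * h x, ⟨continuousOn_const.mul hC.1, fun x hx => (hC.2.1 x hx).const_mul k,
      (continuousOn_const.mul hC.2.2).congr hder⟩,
      ⟨p, hp0, hpD, fun x hx => by simp [hpz x hx]⟩, fun hD => ?_, ?_, rfl⟩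
    · simp [hpz _ ((ENNReal.ofReal_lt_iff_lt_toReal hp0 hD).1 hpD)]
    · rw [← hkN, ← hNe, muL2, muL2, ← lintegral_const_mul' _ _ ENNReal.ofReal_ne_top]
      congr 1
      ext x
      rw [← ENNReal.ofReal_mul (by positivity), mul_pow]
  have hDf : (Dform a b D fun x => k * h x) = ENNReal.ofReal (k ^ 2) * Dform a b D h := by
    rw [Dform, Dform, ← lintegral_const_mul' _ _ ENNReal.ofReal_ne_top]
    apply setLIntegral_congr_fun (ooI_meas D)
    intro x hx
    simp only
    rw [← ENNReal.ofReal_mul (by positivity), hder x hx]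
    congr 1
    ring
  calc lam0 a b D * muL2 a b D h ≤ ENNReal.ofReal (k ^ 2) * Dform a b D h * ENNReal.ofReal N := by
        rw [hNe, ← hDf]; gcongr
    _ = (ENNReal.ofReal (k ^ 2) * ENNReal.ofReal N) * Dform a b D h := by ring
    _ = _ := by rw [hkN, one_mul]

/-- An integrated Picone inequality. If `h(q) = 0`, `f > 0` and `f' < 0`, then
`-(h² / f)' ≤ h'² / (-f')`, the difference being a perfect square over a positive quantity. -/
theorem picone {h f : ℝ → ℝ} {u q : ℝ} (huq : u ≤ q)
    (hh : ∀ x ∈ Icc u q, DifferentiableAt ℝ h x) (hh' : ContinuousOn (deriv h) (Icc u q))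
    (hf : ∀ x ∈ Icc u q, DifferentiableAt ℝ f x) (hf' : ContinuousOn (deriv f) (Icc u q))
    (hpos : ∀ x ∈ Icc u q, 0 < f x) (hneg : ∀ x ∈ Icc u q, deriv f x < 0) (hq : h q = 0) :
    h u ^ 2 ≤ f u * ∫ x in u..q, deriv h x ^ 2 / (-deriv f x) := by
  have hhc : ContinuousOn h (Icc u q) := fun x hx => (hh x hx).continuousAt.continuousWithinAt
  have hfc : ContinuousOn f (Icc u q) := fun x hx => (hf x hx).continuousAt.continuousWithinAt
  have hd : ∀ x ∈ uIcc u q, HasDerivAt (fun x => h x ^ 2 / f x)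
      ((2 * h x * deriv h x * f x - h x ^ 2 * deriv f x) / f x ^ 2) x := by
    intro x hx
    rw [uIcc_of_le huq] at hx
    have := ((hh x hx).hasDerivAt.pow 2).div (hf x hx).hasDerivAt (hpos x hx).ne'
    exact this.congr_deriv (by simp)
  have hi : IntervalIntegrable
      (fun x => (2 * h x * deriv h x * f x - h x ^ 2 * deriv f x) / f x ^ 2) volume u q := by
    apply ContinuousOn.intervalIntegrable
    rw [uIcc_of_le huq]
    exact ((((continuousOn_const.mul hhc).mul hh').mul hfc).sub ((hhc.pow 2).mul hf')).div
      (hfc.pow 2) fun x hx => (pow_pos (hpos x hx) 2).ne'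
  have hi2 : IntervalIntegrable (fun x => deriv h x ^ 2 / (-deriv f x)) volume u q := by
    apply ContinuousOn.intervalIntegrable
    rw [uIcc_of_le huq]
    exact (hh'.pow 2).div hf'.neg fun x hx => (neg_pos.2 (hneg x hx)).ne'
  have h1 := intervalIntegral.integral_eq_sub_of_hasDerivAt hd hi
  have h2 := intervalIntegral.integral_mono_on huq hi2.neg hi (fun x hx => by
    have p1 := hpos x hx
    have p2 := neg_pos.2 (hneg x hx)
    rw [← sub_nonneg]
    have e : (2 * h x * deriv h x * f x - h x ^ 2 * deriv f x) / f x ^ 2 -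
        -(deriv h x ^ 2 / (-deriv f x)) =
        (h x * (-deriv f x) + deriv h x * f x) ^ 2 / (f x ^ 2 * (-deriv f x)) := by
      have := p1.ne'
      have := (hneg x hx).ne
      field_simp
      ring
    simp only [Pi.neg_apply]
    rw [e]
    positivity)
  simp only [Pi.neg_apply, intervalIntegral.integral_neg] at h2
  rw [h1, hq] at h2
  have p := hpos u ⟨le_rfl, huq⟩
  have h3 : h u ^ 2 / f u ≤ ∫ x in u..q, deriv h x ^ 2 / (-deriv f x) := by
    simp at h2 ⊢
    linarith
  rw [div_le_iff₀ p] at h3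
  linarith

/-- The inverse of `opI` as a quotient. Nonvanishing of the integral is needed to invert the
quotient when `-f'(x)` is truncated to `0`. -/
theorem opI_inv {a b : ℝ → ℝ} {D : ℝ≥0∞} {f : ℝ → ℝ} {x : ℝ}
    (h0 : ∫⁻ u in Set.Ioo 0 x, ENNReal.ofReal (f u) ∂(muM a b D) ≠ 0) :
    (opI a b D f x)⁻¹ = ENNReal.ofReal (-deriv f x) / (ENNReal.ofReal (Real.exp (-Cf a b x)) *
      ∫⁻ u in Set.Ioo 0 x, ENNReal.ofReal (f u) ∂(muM a b D)) := by
  rw [opI, ENNReal.inv_div (Or.inl ENNReal.ofReal_ne_top)]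
  exact Or.inr (mul_ne_zero (ENNReal.ofReal_pos.2 (Real.exp_pos _)).ne' h0)

theorem FI_anti {D : ℝ≥0∞} {f : ℝ → ℝ} (hf : f ∈ FI D) {x y : ℝ} (hx : 0 ≤ x) (hxy : x ≤ y)
    (hy : y ∈ ooI D) : f y ≤ f x := by
  have : AntitoneOn f (Icc 0 y) := by
    apply antitoneOn_of_deriv_nonpos (convex_Icc _ _)
    · exact hf.1.1.mono fun z hz => ⟨hz.1, (ENNReal.ofReal_le_ofReal hz.2).trans hy.2.le⟩
    · rw [interior_Icc]
      exact fun z hz => (hf.1.2.1 z (ooI_down hy hz.1 hz.2.le)).differentiableWithinAt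
    · rw [interior_Icc]
      exact fun z hz => (hf.2.2 z (ooI_down hy hz.1 hz.2.le)).le
  exact this ⟨hx, hxy⟩ ⟨hy.1.le, le_rfl⟩ hxy

namespace Model
variable {a b : ℝ → ℝ} {D : ℝ≥0∞} {ρ s : ℝ → ℝ}

theorem lint_muM (M : Model a b D ρ s) (F : ℝ → ℝ≥0∞) :
    ∫⁻ x, F x ∂(muM a b D) = ∫⁻ x, (ooI D).indicator F x ∂(mu ρ) := by
  rw [M.mu_eq, ← setLIntegral_univ, ← setLIntegral_univ (fun x => (ooI D).indicator F x),
    M.lint_mu _ .univ, M.lint_mu _ .univ]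
  congr 1
  ext x
  by_cases h : x ∈ ooI D
  · simp [h]
  · simp [M.rzero x h]

/-- Every `f ∈ FI` bounds `λ₀` from below by the infimum of `I(f)⁻¹`: for a test function `h`,
Picone's inequality gives `h(u)² ≤ f(u) ∫_u h'²/(-f')`, and integrating in `u` against `μ`,
exchanging integrals and using `c e^{-C(x)} ∫₀ˣ f dμ ≤ -f'(x)` gives `c μ(h²) ≤ D(h)`. -/
theorem lower (M : Model a b D ρ s) {f : ℝ → ℝ} (hf : f ∈ FI D) {c : ℝ≥0∞}
    (hc : ∀ x ∈ ooI D, c ≤ (opI a b D f x)⁻¹) : c ≤ lam0 a b D := by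
  apply le_sInf
  rintro r ⟨h, hC, ⟨p, hp0, hpD, hp⟩, -, hL2, rfl⟩
  obtain ⟨q, hqD, hpq⟩ := ooI_up hpD
  set V : ℝ → ℝ≥0∞ := (ooI D).indicator fun x => ENNReal.ofReal (deriv h x ^ 2 / (-deriv f x)) with hV
  set F : ℝ → ℝ≥0∞ := (ooI D).indicator fun x => ENNReal.ofReal (f x) with hF
  have hVm : Measurable V := by
    refine Measurable.indicator ?_ (ooI_meas D)
    exact (((measurable_deriv h).pow_const 2).div (measurable_deriv f).neg).ennreal_ofReal
  have step1 : ∀ u ∈ ooI D, ENNReal.ofReal (h u ^ 2) ≤ F u * ∫⁻ x in Ioi u, V x := by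
    intro u hu
    rcases lt_or_ge p u with hpu | hpu
    · simp [hp u hpu]
    have huq : u ≤ q := hpu.trans hpq.le
    have hsub : Icc u q ⊆ ooI D := fun x hx => ooI_down hqD (hu.1.trans_le hx.1) hx.2
    have h1 := picone huq (fun x hx => hC.2.1 x (hsub hx)) (hC.2.2.mono hsub)
      (fun x hx => hf.1.2.1 x (hsub hx)) (hf.1.2.2.mono hsub) (fun x hx => hf.2.1 x (hsub hx))
      (fun x hx => hf.2.2 x (hsub hx)) (hp q hpq)
    have hcon : ContinuousOn (fun x => deriv h x ^ 2 / (-deriv f x)) (Icc u q) :=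
      ((hC.2.2.mono hsub).pow 2).div (hf.1.2.2.mono hsub).neg
        fun x hx => (neg_pos.2 (hf.2.2 x (hsub hx))).ne'
    refine (ENNReal.ofReal_le_ofReal h1).trans ?_
    rw [ENNReal.ofReal_mul (hf.2.1 u hu).le, hF, indicator_of_mem hu]
    gcongr
    rw [intervalIntegral.integral_of_le huq, integral_Ioc_eq_integral_Ioo,
      ofReal_integral_eq_lintegral_ofReal]
    · calc ∫⁻ x in Ioo u q, ENNReal.ofReal (deriv h x ^ 2 / (-deriv f x))
          = ∫⁻ x in Ioo u q, V x := by
            apply setLIntegral_congr_fun measurableSet_Ioo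
            intro x hx
            simp only [hV]
            rw [indicator_of_mem (hsub ⟨hx.1.le, hx.2.le⟩)]
        _ ≤ _ := lintegral_mono_set Ioo_subset_Ioi_self
    · exact hcon.integrableOn_Icc.mono_set Ioo_subset_Icc_self
    · refine (ae_restrict_iff' measurableSet_Ioo).2 (ae_of_all _ fun x hx => ?_)
      exact div_nonneg (sq_nonneg _) (neg_pos.2 (hf.2.2 x (hsub ⟨hx.1.le, hx.2.le⟩))).le
  have step2 : ∀ x, c * (V x * ∫⁻ u in Ioo 0 x, F u ∂(mu ρ)) ≤
      (ooI D).indicator (fun x => ENNReal.ofReal (Real.exp (Cf a b x) * deriv h x ^ 2)) x := by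
    intro x
    by_cases hx : x ∈ ooI D
    swap
    · simp [hV, hx]
    have hFx : ∫⁻ u in Ioo 0 x, ENNReal.ofReal (f u) ∂(mu ρ) = ∫⁻ u in Ioo 0 x, F u ∂(mu ρ) := by
      apply setLIntegral_congr_fun measurableSet_Ioo
      intro u hu
      simp only [hF]
      rw [indicator_of_mem (ooI_down hx hu.1 hu.2.le)]
    have hA0 : 0 < ∫⁻ u in Ioo 0 x, ENNReal.ofReal (f u) ∂(mu ρ) :=
      M.lint_pos hx.1 (fun u hu => M.rpos u (ooI_down hx hu.1 hu.2.le)) (hf.2.1 x hx)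
        fun u hu => ENNReal.ofReal_le_ofReal (FI_anti hf hu.1.le hu.2.le hx)
    have hA1 : ∫⁻ u in Ioo 0 x, ENNReal.ofReal (f u) ∂(mu ρ) < ∞ :=
      M.lint_lt_top (f 0)
        fun u hu => ENNReal.ofReal_le_ofReal (FI_anti hf le_rfl hu.1.le (ooI_down hx hu.1 hu.2.le))
    have h1 := hc x hx
    rw [opI_inv (by rw [M.mu_eq]; exact hA0.ne'), M.mu_eq] at h1
    have h2 := ENNReal.mul_le_of_le_div h1
    rw [hFx] at h2
    have e1 : ENNReal.ofReal (Real.exp (Cf a b x)) * ENNReal.ofReal (Real.exp (-Cf a b x)) = 1 := by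
      rw [← ENNReal.ofReal_mul (Real.exp_pos _).le, ← Real.exp_add]; simp
    have hw := neg_pos.2 (hf.2.2 x hx)
    rw [indicator_of_mem hx, hV, indicator_of_mem hx]
    set J := ∫⁻ u in Ioo 0 x, F u ∂(mu ρ)
    calc c * (ENNReal.ofReal (deriv h x ^ 2 / (-deriv f x)) * J)
        = ENNReal.ofReal (Real.exp (Cf a b x)) * ENNReal.ofReal (Real.exp (-Cf a b x)) *
          (c * (ENNReal.ofReal (deriv h x ^ 2 / (-deriv f x)) * J)) := by rw [e1, one_mul]
      _ = ENNReal.ofReal (Real.exp (Cf a b x)) * ENNReal.ofReal (deriv h x ^ 2 / (-deriv f x)) *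
          (c * (ENNReal.ofReal (Real.exp (-Cf a b x)) * J)) := by ring
      _ ≤ ENNReal.ofReal (Real.exp (Cf a b x)) * ENNReal.ofReal (deriv h x ^ 2 / (-deriv f x)) *
          ENNReal.ofReal (-deriv f x) := by gcongr
      _ = _ := by
        rw [mul_assoc, ← ENNReal.ofReal_mul (by positivity), div_mul_cancel₀ _ hw.ne',
          ← ENNReal.ofReal_mul (Real.exp_pos _).le]
  calc c = c * muL2 a b D h := by rw [hL2, mul_one]
    _ ≤ c * ∫⁻ u, F u * (∫⁻ x in Ioi u, V x) ∂(mu ρ) := by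
        rw [muL2, M.lint_muM]
        gcongr with u
        by_cases hu : u ∈ ooI D
        · rw [indicator_of_mem hu]; exact step1 u hu
        · simp [hu]
    _ = c * ∫⁻ x, V x * ∫⁻ u in Ioo 0 x, F u ∂(mu ρ) := by rw [M.tonelli hf.1.meas hVm]
    _ ≤ ∫⁻ x, c * (V x * ∫⁻ u in Ioo 0 x, F u ∂(mu ρ)) := lintegral_const_mul_le _ _
    _ ≤ _ := by
        rw [Dform, ← lintegral_indicator (ooI_meas D)]
        exact lintegral_mono step2

end Model

/-! ### Upper bounds for `λ₀` from `C¹` truncations -/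

/-- A `C¹` approximation of the positive part `t ↦ t⁺`. -/
def phi (ε t : ℝ) : ℝ := max t 0 ^ 2 / (max t 0 + ε)

/-- The derivative of `phi ε`, for `ε > 0`. -/
def phi' (ε t : ℝ) : ℝ := 1 - ε ^ 2 / (max t 0 + ε) ^ 2

theorem phi_of_nonpos (ε : ℝ) {t : ℝ} (ht : t ≤ 0) : phi ε t = 0 := by simp [phi, ht]

theorem phi'_of_nonpos {ε : ℝ} (hε : 0 < ε) {t : ℝ} (ht : t ≤ 0) : phi' ε t = 0 := by
  simp [phi', ht, hε.ne']

theorem phi_hasDerivAt {ε : ℝ} (hε : 0 < ε) (t : ℝ) : HasDerivAt (phi ε) (phi' ε t) t := by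
  have key : ∀ t : ℝ, 0 ≤ t → HasDerivAt (fun t : ℝ => t ^ 2 / (t + ε)) (phi' ε t) t := by
    intro t ht
    have hne : t + ε ≠ 0 := by positivity
    have := (hasDerivAt_pow 2 t).div ((hasDerivAt_id t).add_const ε) hne
    refine this.congr_deriv ?_
    simp only [phi', max_eq_left ht, id]
    field_simp
    push_cast
    ring
  rcases lt_trichotomy t 0 with ht | rfl | ht
  · rw [phi'_of_nonpos hε ht.le]
    refine (hasDerivAt_const t (0:ℝ)).congr_of_eventuallyEq ?_
    filter_upwards [Iio_mem_nhds ht] with y hy using phi_of_nonpos ε (le_of_lt hy)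
  · have h1 : HasDerivWithinAt (phi ε) (phi' ε 0) (Ici 0) 0 := by
      refine (key 0 le_rfl).hasDerivWithinAt.congr (fun y hy => ?_) ?_
      · simp [phi, max_eq_left (mem_Ici.1 hy)]
      · simp [phi]
    have h2 : HasDerivWithinAt (phi ε) (phi' ε 0) (Iic 0) 0 := by
      rw [phi'_of_nonpos hε le_rfl]
      refine (hasDerivWithinAt_const (0:ℝ) (Iic 0) (0:ℝ)).congr (fun y hy => ?_) ?_
      · exact phi_of_nonpos ε hy
      · exact phi_of_nonpos ε le_rfl
    have := h2.union h1
    rwa [Iic_union_Ici, hasDerivWithinAt_univ] at this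
  · refine (key t ht.le).congr_of_eventuallyEq ?_
    filter_upwards [Ioi_mem_nhds ht] with y hy
    simp [phi, max_eq_left (le_of_lt (mem_Ioi.1 hy))]

theorem phi'_cont {ε : ℝ} (hε : 0 < ε) : Continuous (phi' ε) := by
  unfold phi'
  refine continuous_const.sub (continuous_const.div (by fun_prop) fun t => ?_)
  have : 0 ≤ max t 0 := le_max_right _ _
  positivity

theorem phi'_sq_le {ε : ℝ} (hε : 0 < ε) (t : ℝ) : phi' ε t ^ 2 ≤ 1 := by
  have h0 : 0 ≤ max t 0 := le_max_right _ _
  have h1 : ε ^ 2 / (max t 0 + ε) ^ 2 ≤ 1 := by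
    rw [div_le_one (by positivity)]
    gcongr
    linarith
  have h2 : 0 ≤ ε ^ 2 / (max t 0 + ε) ^ 2 := by positivity
  unfold phi'
  nlinarith

theorem le_phi_sq {ε : ℝ} (hε : 0 < ε) {t : ℝ} (ht : 0 ≤ t) : t ^ 2 - 2 * ε * t ≤ phi ε t ^ 2 := by
  have h1 : t - ε ≤ phi ε t := by
    rw [phi, max_eq_left ht, le_div_iff₀ (by positivity)]
    nlinarith
  rcases le_total t ε with h | h
  · nlinarith [sq_nonneg (phi ε t)]
  · have : (t - ε) ^ 2 ≤ phi ε t ^ 2 := pow_le_pow_left₀ (by linarith) h1 2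
    nlinarith

/-- `z` is the first zero of the solution `sol ρ s l`, and it lies in `(0,D)`. -/
structure FirstZero (D : ℝ≥0∞) (ρ s : ℝ → ℝ) (l z : ℝ) : Prop where
  mem : z ∈ ooI D
  zero : sol ρ s l z = 0
  pos : ∀ x, 0 ≤ x → x < z → 0 < sol ρ s l x

/-- A solution that is nonpositive somewhere in `(0,D)` has a first zero there, since it starts
from the value `1`. -/
theorem Weights.exists_firstZero {D : ℝ≥0∞} {ρ s : ℝ → ℝ} (W : Weights ρ s) {l x : ℝ}
    (hx : x ∈ ooI D) (h : sol ρ s l x ≤ 0) : ∃ z, FirstZero D ρ s l z := by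
  have hcp : IsCompact (Icc 0 x ∩ {y | sol ρ s l y ≤ 0}) :=
    isCompact_Icc.inter_right (isClosed_le (W.sol_cont l) continuous_const)
  obtain ⟨z, ⟨⟨hz0, hzx⟩, hz⟩, hmin⟩ := hcp.exists_isLeast ⟨x, ⟨hx.1.le, le_rfl⟩, h⟩
  obtain ⟨y, ⟨hy0, hyz⟩, hy⟩ := intermediate_value_Icc' hz0 (W.sol_cont l).continuousOn
    (show (0:ℝ) ∈ Icc (sol ρ s l z) (sol ρ s l 0) from ⟨hz, by rw [W.sol_zero]; exact zero_le_one⟩)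
  have hyz' : z = y := le_antisymm (hmin ⟨⟨hy0, hyz.trans hzx⟩, hy.le⟩) hyz
  subst hyz'
  have hzp : 0 < z := by
    rcases hz0.eq_or_lt with h0 | h0
    · rw [← h0, W.sol_zero] at hy; exact absurd hy one_ne_zero
    · exact h0
  refine ⟨z, ooI_down hx hzp hzx, hy, fun w hw0 hwz => ?_⟩
  by_contra hcon
  exact absurd (hmin ⟨⟨hw0, hwz.le.trans hzx⟩, not_lt.1 hcon⟩) (not_le.2 hwz)

theorem Weights.sol_antitone {ρ s : ℝ → ℝ} (W : Weights ρ s) {l q : ℝ} (hl : 0 ≤ l)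
    (hpos : ∀ x ∈ Ioo 0 q, 0 < sol ρ s l x) : AntitoneOn (sol ρ s l) (Icc 0 q) := by
  apply antitoneOn_of_deriv_nonpos (convex_Icc _ _) (W.sol_cont l).continuousOn
  · rw [interior_Icc]
    exact fun x hx => (W.sol_hasDerivAt l x hx.1).differentiableAt.differentiableWithinAt
  · rw [interior_Icc]
    intro x hx
    rw [(W.sol_hasDerivAt l x hx.1).deriv, neg_nonpos]
    refine mul_nonneg (mul_nonneg hl (W.spos x).le)
      (intervalIntegral.integral_nonneg_of_ae_restrict hx.1.le ?_)
    rw [Filter.EventuallyLE, restrict_Ioo_eq_restrict_Icc.symm,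
      ae_restrict_iff' measurableSet_Ioo]
    exact ae_of_all _ fun u hu =>
      mul_nonneg (hpos u ⟨hu.1, hu.2.trans hx.2⟩).le (W.nonneg u)

namespace Model
variable {a b : ℝ → ℝ} {D : ℝ≥0∞} {ρ s : ℝ → ℝ}

theorem inner_pos (M : Model a b D ρ s) {l x : ℝ} (hx : x ∈ ooI D)
    (hpos : ∀ u ∈ Ioo 0 x, 0 < sol ρ s l u) : 0 < ∫ u in (0:ℝ)..x, sol ρ s l u * ρ u :=
  intervalIntegral.intervalIntegral_pos_of_pos_on (M.int_mul (M.sol_cont l) _ _)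
    (fun u hu => mul_pos (hpos u hu) (M.rpos u (ooI_down hx hu.1 hu.2.le))) hx.1

/-- For `G ≤ 0` on `[z,∞)`, the `C¹` truncation `φ_ε ∘ G` of `G⁺` is an admissible test function
supported in `[0,z]`, and since `0 ≤ φ_ε' ≤ 1` its energy is at most that of `G` on `(0,z)`. -/
theorem cut (M : Model a b D ρ s) {G G' : ℝ → ℝ} {z ε : ℝ} (hz : z ∈ ooI D) (hε : 0 < ε)
    (hGc : Continuous G) (hG : ∀ x, 0 < x → HasDerivAt G (G' x) x)
    (hG' : ContinuousOn G' (Ioi 0)) (hGz : ∀ x, z ≤ x → G x ≤ 0) :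
    lam0 a b D * ∫⁻ x in Ioo 0 z, ENNReal.ofReal (phi ε (G x) ^ 2) ∂(mu ρ) ≤
      ∫⁻ x in Ioo 0 z, ENNReal.ofReal (G' x ^ 2 * (s x)⁻¹) := by
  have hφc : Continuous (phi ε) :=
    continuous_iff_continuousAt.2 fun t => (phi_hasDerivAt hε t).continuousAt
  have hder : ∀ x, 0 < x → HasDerivAt (fun x => phi ε (G x)) (phi' ε (G x) * G' x) x :=
    fun x hx => (phi_hasDerivAt hε (G x)).comp x (hG x hx)
  have hC : C1C D fun x => phi ε (G x) := by
    refine ⟨(hφc.comp hGc).continuousOn, fun x hx => (hder x hx.1).differentiableAt, ?_⟩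
    have : ContinuousOn (fun x => phi' ε (G x) * G' x) (ooI D) :=
      ((phi'_cont hε).comp hGc).continuousOn.mul (hG'.mono fun x hx => hx.1)
    exact this.congr fun x hx => (hder x hx.1).deriv
  have hmu : muL2 a b D (fun x => phi ε (G x)) =
      ∫⁻ x in Ioo 0 z, ENNReal.ofReal (phi ε (G x) ^ 2) ∂(mu ρ) := by
    rw [muL2, M.lint_muM, ← lintegral_indicator measurableSet_Ioo]
    congr 1
    ext x
    by_cases hx : x ∈ Ioo 0 z
    · rw [indicator_of_mem hx, indicator_of_mem (ooI_down hz hx.1 hx.2.le)]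
    · rw [indicator_of_notMem hx]
      by_cases hxD : x ∈ ooI D
      · have : z ≤ x := by
          by_contra hcon
          exact hx ⟨hxD.1, not_le.1 hcon⟩
        rw [indicator_of_mem hxD, phi_of_nonpos ε (hGz x this)]
        simp
      · rw [indicator_of_notMem hxD]
  obtain ⟨K, hK⟩ := (isCompact_Icc (a := (0:ℝ)) (b := z)).bddAbove_image
    (((hφc.comp hGc).pow 2).continuousOn)
  have hfin : muL2 a b D (fun x => phi ε (G x)) ≠ ∞ := by
    rw [hmu]
    exact (M.lint_lt_top K fun u hu =>
      ENNReal.ofReal_le_ofReal (hK ⟨u, ⟨hu.1.le, hu.2.le⟩, rfl⟩)).ne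
  have := lam0_mul_le (a := a) (b := b) hC
    ⟨z, hz.1.le, hz.2, fun x hx => phi_of_nonpos ε (hGz x hx.le)⟩ hfin
  rw [hmu] at this
  refine this.trans ?_
  rw [Dform, ← lintegral_indicator (ooI_meas D), ← lintegral_indicator measurableSet_Ioo]
  refine lintegral_mono fun x => ?_
  by_cases hx : x ∈ Ioo 0 z
  · rw [indicator_of_mem hx, indicator_of_mem (ooI_down hz hx.1 hx.2.le), (hder x hx.1).deriv,
      M.exp_pos x (ooI_down hz hx.1 hx.2.le)]
    apply ENNReal.ofReal_le_ofReal
    have h1 := phi'_sq_le hε (G x)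
    have h2 := inv_pos.2 (M.spos x)
    rw [mul_pow, mul_comm]
    apply mul_le_mul_of_nonneg_right _ h2.le
    nlinarith [sq_nonneg (G' x)]
  · rw [indicator_of_notMem hx]
    by_cases hxD : x ∈ ooI D
    · have : z ≤ x := by
        by_contra hcon
        exact hx ⟨hxD.1, not_le.1 hcon⟩
      rw [indicator_of_mem hxD, (hder x hxD.1).deriv, phi'_of_nonpos hε (hGz x this)]
      simp
    · rw [indicator_of_notMem hxD]

/-- `λ₀` is finite: a truncation of `x ↦ z - x` is a test function of finite energy. -/
theorem lam0_ne_top (M : Model a b D ρ s) (hD : 0 < D) : lam0 a b D ≠ ∞ := by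
  obtain ⟨z, hz, hz0⟩ := ooI_up (D := D) (x := 0) (by simpa using hD)
  have h := M.cut (G := fun x => z - x) (G' := fun _ => -1) (ε := z / 8) hz (by positivity)
    (by fun_prop) (fun x _ => (hasDerivAt_id x).const_sub z) continuousOn_const
    (fun x hx => by linarith)
  have hB : ∫⁻ x in Ioo 0 z, ENNReal.ofReal ((-1) ^ 2 * (s x)⁻¹) < ∞ := by
    obtain ⟨K, hK⟩ := (isCompact_Icc (a := (0:ℝ)) (b := z)).bddAbove_image
      ((M.scont.inv₀ fun x => (M.spos x).ne').continuousOn)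
    calc _ ≤ ∫⁻ x in Ioo 0 z, ENNReal.ofReal K := by
          apply setLIntegral_mono measurable_const
          intro x hx
          apply ENNReal.ofReal_le_ofReal
          simpa using hK ⟨x, ⟨hx.1.le, hx.2.le⟩, rfl⟩
      _ < ∞ := by
          rw [setLIntegral_const]
          exact ENNReal.mul_lt_top ENNReal.ofReal_lt_top (by simp)
  have hA : 0 < ∫⁻ x in Ioo 0 z, ENNReal.ofReal (phi (z / 8) (z - x) ^ 2) ∂(mu ρ) := by
    refine lt_of_lt_of_le ?_ (lintegral_mono_set (Ioo_subset_Ioo_right (by linarith : z / 2 ≤ z)))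
    refine M.lint_pos (k := z ^ 2 / 8) (by linarith)
      (fun u hu => M.rpos u (ooI_down hz hu.1 (by linarith [hu.2]))) (by positivity) fun u hu => ?_
    apply ENNReal.ofReal_le_ofReal
    have h1 := le_phi_sq (ε := z / 8) (by positivity) (t := z - u) (by linarith [hu.2])
    nlinarith [hu.1, hu.2]
  intro htop
  rw [htop, ENNReal.top_mul hA.ne'] at h
  exact absurd (h.trans_lt hB) (lt_irrefl _)

/-- Energy identity for a solution stopped at its first zero. -/
theorem energy (M : Model a b D ρ s) {l z : ℝ} (hl : 0 ≤ l) (hz : FirstZero D ρ s l z) :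
    ∫⁻ x in Ioo 0 z, ENNReal.ofReal
        ((-(l * s x * ∫ u in (0:ℝ)..x, sol ρ s l u * ρ u)) ^ 2 * (s x)⁻¹) =
      ENNReal.ofReal l * ∫⁻ x in Ioo 0 z, ENNReal.ofReal (sol ρ s l x ^ 2) ∂(mu ρ) := by
  set g := sol ρ s l with hg
  set m : ℝ → ℝ := fun x => ∫ u in (0:ℝ)..x, g u * ρ u with hm
  have hgc : Continuous g := M.sol_cont l
  have hmc : Continuous m := M.cont_inner hgc
  have hm0 : ∀ x ∈ Ioo 0 z, 0 < m x := fun x hx =>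
    M.inner_pos (ooI_down hz.mem hx.1 hx.2.le) fun u hu => hz.pos u hu.1.le (hu.2.trans hx.2)
  have hF : Measurable ((Ioo 0 z).indicator fun u => ENNReal.ofReal (g u)) :=
    hgc.measurable.ennreal_ofReal.indicator measurableSet_Ioo
  have hV : Measurable ((Ioo 0 z).indicator fun x => ENNReal.ofReal (l * s x * m x)) :=
    Measurable.indicator (((M.scont.measurable.const_mul l).mul hmc.measurable).ennreal_ofReal)
      measurableSet_Ioo
  have ht := M.tonelli hF hV
  -- `∫_u^z l s m = g(u) - g(z) = g(u)`, so the left side of Tonelli's identity is `∫ g² dμ`.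
  have e1 : ∀ u, (Ioo 0 z).indicator (fun u => ENNReal.ofReal (g u)) u *
      (∫⁻ x in Ioi u, (Ioo 0 z).indicator (fun x => ENNReal.ofReal (l * s x * m x)) x) =
      (Ioo 0 z).indicator (fun u => ENNReal.ofReal (g u ^ 2)) u := by
    intro u
    by_cases hu : u ∈ Ioo 0 z
    · rw [indicator_of_mem hu, indicator_of_mem hu, lintegral_indicator measurableSet_Ioo,
        Measure.restrict_restrict measurableSet_Ioo, Ioo_inter_Ioi, max_eq_right hu.1.le]
      have := ftc_lintegral (f := g) (f' := fun x => -(l * s x * m x)) hu.2.le hgc.continuousOn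
        (fun x hx => M.sol_hasDerivAt l x (hu.1.trans hx.1)) (fun x hx => by
          have := hm0 x ⟨hu.1.trans hx.1, hx.2⟩
          have := M.spos x
          simp only [neg_nonpos]
          positivity)
      simp only [neg_neg] at this
      rw [this, hg, hz.zero, sub_zero, sq, ENNReal.ofReal_mul (hz.pos u hu.1.le hu.2).le]
    · simp [hu]
  have e2 : ∀ x, (Ioo 0 z).indicator (fun x => ENNReal.ofReal ((-(l * s x * m x)) ^ 2 * (s x)⁻¹)) x =
      ENNReal.ofReal l * ((Ioo 0 z).indicator (fun x => ENNReal.ofReal (l * s x * m x)) x *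
        ∫⁻ u in Ioo 0 x, (Ioo 0 z).indicator (fun u => ENNReal.ofReal (g u)) u ∂(mu ρ)) := by
    intro x
    by_cases hx : x ∈ Ioo 0 z
    · rw [indicator_of_mem hx, indicator_of_mem hx]
      have : ∫⁻ u in Ioo 0 x, (Ioo 0 z).indicator (fun u => ENNReal.ofReal (g u)) u ∂(mu ρ) =
          ENNReal.ofReal (m x) := by
        rw [← M.lint_inner hgc hx.1.le fun u hu => (hz.pos u hu.1.le (hu.2.trans hx.2)).le]
        apply setLIntegral_congr_fun measurableSet_Ioo
        intro u hu
        simp only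
        rw [indicator_of_mem (show u ∈ Ioo 0 z from ⟨hu.1, hu.2.trans hx.2⟩)]
      have h1 := hm0 x hx
      have h2 := M.spos x
      rw [this, ← ENNReal.ofReal_mul (by positivity), ← ENNReal.ofReal_mul hl]
      congr 1
      field_simp
    · simp [hx]
  simp_rw [e1] at ht
  rw [← lintegral_indicator measurableSet_Ioo, ← lintegral_indicator measurableSet_Ioo, ht,
    ← lintegral_const_mul' _ _ ENNReal.ofReal_ne_top]
  exact lintegral_congr e2

end Model

/-! ### Solutions as extremal trial functions -/

namespace Model
variable {a b : ℝ → ℝ} {D : ℝ≥0∞} {ρ s : ℝ → ℝ}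

/-- If the solution with parameter `l` has a zero in `(0,D)`, then `λ₀ ≤ l`: the solution stopped
at its first zero has Rayleigh quotient `l`, and its `C¹` truncations approximate it. -/
theorem lam0_le_of_firstZero (M : Model a b D ρ s) {l z : ℝ} (hl : 0 ≤ l)
    (hz : FirstZero D ρ s l z) : lam0 a b D ≤ ENNReal.ofReal l := by
  have hzp := hz.mem.1
  set g := sol ρ s l with hg
  set m : ℝ → ℝ := fun x => ∫ u in (0:ℝ)..x, g u * ρ u with hm
  have hgc : Continuous g := M.sol_cont l
  have hmc : Continuous m := M.cont_inner hgc
  have hanti := M.sol_antitone hl fun x (hx : x ∈ Ioo 0 z) => hz.pos x hx.1.le hx.2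
  have hg1 : ∀ x ∈ Ioo 0 z, g x ≤ 1 := fun x hx => by
    rw [← M.sol_zero l]
    exact hanti ⟨le_rfl, hzp.le⟩ ⟨hx.1.le, hx.2.le⟩ hx.1.le
  have hmz : 0 < m z := M.inner_pos hz.mem fun u hu => hz.pos u hu.1.le hu.2
  -- A `C¹` extension of `g` beyond `z` which stays nonpositive there.
  set G : ℝ → ℝ := fun x => 1 - l * ∫ t in (0:ℝ)..x, s t * m (min t z) with hG
  have hkc : Continuous fun t => s t * m (min t z) := M.scont.mul (hmc.comp (by fun_prop))
  have hGg : ∀ x, 0 ≤ x → x ≤ z → G x = g x := by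
    intro x h0 hx
    rw [hg, M.sol_eq l x h0, hG]
    simp only
    congr 2
    apply intervalIntegral.integral_congr
    intro t ht
    rw [uIcc_of_le h0] at ht
    simp only [hm, min_eq_left (ht.2.trans hx), hg]
  have hGd : ∀ x, HasDerivAt G (-(l * (s x * m (min x z)))) x := fun x =>
    ((hkc.integral_hasStrictDerivAt 0 x).hasDerivAt.const_mul l).const_sub 1
  have hGz : ∀ x, z ≤ x → G x ≤ 0 := by
    intro x hx
    have h1 : G x = G z - l * ∫ t in z..x, s t * m (min t z) := by
      simp only [hG]
      rw [← intervalIntegral.integral_add_adjacent_intervals (hkc.intervalIntegrable 0 z)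
        (hkc.intervalIntegrable z x)]
      ring
    have h2 : 0 ≤ ∫ t in z..x, s t * m (min t z) := by
      apply intervalIntegral.integral_nonneg hx
      intro t ht
      rw [min_eq_right ht.1]
      exact mul_nonneg (M.spos t).le hmz.le
    rw [h1, hGg z hzp.le le_rfl, hg, hz.zero]
    nlinarith
  set T := ∫⁻ x in Ioo 0 z, ENNReal.ofReal (g x ^ 2) ∂(mu ρ) with hT
  have hTfin : T ≠ ∞ := (M.lint_lt_top 1 fun u hu => ENNReal.ofReal_le_ofReal (by
    have := hz.pos u hu.1.le hu.2
    have := hg1 u hu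
    nlinarith)).ne
  have hTpos : T ≠ 0 := by
    refine (lt_of_lt_of_le ?_
      (lintegral_mono_set (Ioo_subset_Ioo_right (by linarith : z / 2 ≤ z)))).ne'
    have hp := hz.pos (z / 2) (by positivity) (by linarith)
    refine M.lint_pos (k := g (z / 2) ^ 2) (by linarith)
      (fun u hu => M.rpos u (ooI_down hz.mem hu.1 (by linarith [hu.2]))) (pow_pos hp 2) fun u hu => ?_
    apply ENNReal.ofReal_le_ofReal
    exact pow_le_pow_left₀ hp.le
      (hanti ⟨hu.1.le, by linarith [hu.2]⟩ ⟨by linarith, by linarith⟩ hu.2.le) 2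
  set P := mu ρ (Ioo 0 z) with hP
  have hPfin : P ≠ ∞ := by
    rw [hP, M.mu_Ioo hzp.le]
    exact ENNReal.ofReal_ne_top
  -- The case `λ₀ = ∞` is not excluded here, so a finite `r < λ₀` is used in order to pass to the
  -- limit `ε → 0` in an inequality with finite terms.
  apply ENNReal.le_of_forall_nnreal_lt
  intro r hr
  have key : ∀ ε : ℝ, 0 < ε → (r : ℝ≥0∞) * T ≤
      ENNReal.ofReal l * T + r * (ENNReal.ofReal (2 * ε) * P) := by
    intro ε hε
    have h1 := M.cut (G := G) (G' := fun x => -(l * (s x * m (min x z)))) hz.mem hε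
      (continuous_iff_continuousAt.2 fun x => (hGd x).continuousAt) (fun x _ => hGd x)
      (Continuous.continuousOn (continuous_const.mul hkc).neg) hGz
    have h2 : ∫⁻ x in Ioo 0 z, ENNReal.ofReal ((-(l * (s x * m (min x z)))) ^ 2 * (s x)⁻¹) =
        ENNReal.ofReal l * T := by
      rw [hT, ← M.energy hl hz]
      apply setLIntegral_congr_fun measurableSet_Ioo
      intro x hx
      simp only [min_eq_left hx.2.le, mul_assoc, hm, hg]
    rw [h2] at h1
    have h3 : T ≤ (∫⁻ x in Ioo 0 z, ENNReal.ofReal (phi ε (G x) ^ 2) ∂(mu ρ)) +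
        ENNReal.ofReal (2 * ε) * P := by
      rw [hP, ← setLIntegral_const, ← lintegral_add_right _ measurable_const]
      apply setLIntegral_mono' measurableSet_Ioo
      intro x hx
      rw [← ENNReal.ofReal_add (sq_nonneg _) (by positivity), hGg x hx.1.le hx.2.le]
      apply ENNReal.ofReal_le_ofReal
      have q0 := hz.pos x hx.1.le hx.2
      have q1 := le_phi_sq hε q0.le
      have q2 := hg1 x hx
      have q3 : 2 * ε * g x ≤ 2 * ε * 1 := by gcongr
      simp only [← hg] at q1
      linarith
    calc (r : ℝ≥0∞) * T ≤ r * ((∫⁻ x in Ioo 0 z, ENNReal.ofReal (phi ε (G x) ^ 2) ∂(mu ρ)) +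
        ENNReal.ofReal (2 * ε) * P) := by gcongr
      _ = r * (∫⁻ x in Ioo 0 z, ENNReal.ofReal (phi ε (G x) ^ 2) ∂(mu ρ)) +
        r * (ENNReal.ofReal (2 * ε) * P) := mul_add _ _ _
      _ ≤ lam0 a b D * (∫⁻ x in Ioo 0 z, ENNReal.ofReal (phi ε (G x) ^ 2) ∂(mu ρ)) +
        r * (ENNReal.ofReal (2 * ε) * P) := by gcongr
      _ ≤ _ := by gcongr
  have hlim : (r : ℝ≥0∞) * T ≤ ENNReal.ofReal l * T := by
    have ht : Tendsto (fun ε : ℝ => ENNReal.ofReal l * T + r * (ENNReal.ofReal (2 * ε) * P))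
        (𝓝[>] 0) (𝓝 (ENNReal.ofReal l * T + r * (ENNReal.ofReal (2 * 0) * P))) := by
      refine Tendsto.mono_left ?_ nhdsWithin_le_nhds
      refine tendsto_const_nhds.add (ENNReal.Tendsto.const_mul
        (ENNReal.Tendsto.mul_const ?_ (Or.inr hPfin)) (Or.inr ENNReal.coe_ne_top))
      exact ENNReal.tendsto_ofReal (Continuous.tendsto (by fun_prop) 0)
    have := ge_of_tendsto ht (by filter_upwards [self_mem_nhdsWithin] with ε hε using key ε hε)
    simpa using this
  exact (ENNReal.mul_le_mul_iff_left hTpos hTfin).1 hlim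

theorem sol_mem_FI (M : Model a b D ρ s) {l : ℝ} (hl : 0 < l)
    (hpos : ∀ x ∈ ooI D, 0 < sol ρ s l x) : sol ρ s l ∈ FI D := by
  have hder : ∀ x ∈ ooI D, deriv (sol ρ s l) x = -(l * s x * ∫ u in (0:ℝ)..x, sol ρ s l u * ρ u) :=
    fun x hx => (M.sol_hasDerivAt l x hx.1).deriv
  refine ⟨⟨(M.sol_cont l).continuousOn,
    fun x hx => (M.sol_hasDerivAt l x hx.1).differentiableAt, ?_⟩, hpos, fun x hx => ?_⟩
  · exact Continuous.continuousOn
      ((continuous_const.mul M.scont).mul (M.cont_inner (M.sol_cont l))).neg |>.congr hder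
  · rw [hder x hx, neg_lt_zero]
    exact mul_pos (mul_pos hl (M.spos x))
      (M.inner_pos hx fun u hu => hpos u (ooI_down hx hu.1 hu.2.le))

/-- A positive function coinciding with `sol ρ s l` on `(0,x]` has `I(f)(x)⁻¹ = l`. -/
theorem opI_inv_sol (M : Model a b D ρ s) {l x : ℝ} {f : ℝ → ℝ} (hx : x ∈ ooI D)
    (hpos : ∀ u ∈ Ioo 0 x, 0 < sol ρ s l u) (hf : ∀ u ∈ Ioo 0 x, f u = sol ρ s l u)
    (hd : deriv f x = deriv (sol ρ s l) x) : (opI a b D f x)⁻¹ = ENNReal.ofReal l := by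
  have h1 : ∫⁻ u in Set.Ioo 0 x, ENNReal.ofReal (f u) ∂(muM a b D) =
      ENNReal.ofReal (∫ u in (0:ℝ)..x, sol ρ s l u * ρ u) := by
    rw [M.mu_eq, ← M.lint_inner (M.sol_cont l) hx.1.le fun u hu => (hpos u hu).le]
    apply setLIntegral_congr_fun measurableSet_Ioo
    intro u hu
    simp only [hf u hu]
  have hm := M.inner_pos hx hpos
  have hs := M.spos x
  rw [opI_inv (by rw [h1]; exact (ENNReal.ofReal_pos.2 hm).ne'), h1, M.exp_neg x hx, hd,
    (M.sol_hasDerivAt l x hx.1).deriv, ← ENNReal.ofReal_mul hs.le, neg_neg,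
    ← ENNReal.ofReal_div_of_pos (mul_pos hs hm), mul_assoc, mul_div_assoc,
    div_self (mul_pos hs hm).ne', mul_one]

/-- The solution stopped at its first zero belongs to `FItil`, with `I(f)⁻¹ = l` before the zero
and `I(f)⁻¹ = 0` from the zero on. -/
theorem iInf_FItil_le (M : Model a b D ρ s) {l z : ℝ} (hl : 0 < l)
    (hz : FirstZero D ρ s l z) :
    (⨅ f ∈ FItil D, ⨆ x ∈ ooI D, (opI a b D f x)⁻¹) ≤ ENNReal.ofReal l := by
  have hzp := hz.mem.1
  set f : ℝ → ℝ := fun x => if 0 ≤ x ∧ x < z then sol ρ s l x else 0 with hf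
  have hfs : ∀ x, 0 ≤ x → x < z → f x = sol ρ s l x := fun x h0 h1 => by simp [hf, h0, h1]
  have hev : ∀ x ∈ Ioo 0 z, f =ᶠ[𝓝 x] sol ρ s l := fun x hx => by
    filter_upwards [Ioo_mem_nhds hx.1 hx.2] with y hy using hfs y hy.1.le hy.2
  have hder : ∀ x ∈ Ioo 0 z,
      deriv f x = -(l * s x * ∫ u in (0:ℝ)..x, sol ρ s l u * ρ u) := fun x hx => by
    rw [(hev x hx).deriv_eq, (M.sol_hasDerivAt l x hx.1).deriv]
  have hfm : f ∈ FItil D := by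
    refine ⟨0, z, le_rfl, hzp, hz.mem.2, ?_, fun x hx => ?_, ?_, fun x hx => ?_, fun x => ?_⟩
    · refine (M.sol_cont l).continuousOn.congr fun x hx => ?_
      rcases hx.2.eq_or_lt with h | h
      · rw [h, hz.zero]; simp [hf]
      · exact hfs x hx.1 h
    · exact (M.sol_hasDerivAt l x hx.1).differentiableAt.congr_of_eventuallyEq (hev x hx)
    · exact Continuous.continuousOn
        ((continuous_const.mul M.scont).mul (M.cont_inner (M.sol_cont l))).neg |>.congr hder
    · rw [hder x hx, neg_lt_zero]
      exact mul_pos (mul_pos hl (M.spos x)) (M.inner_pos (ooI_down hz.mem hx.1 hx.2.le)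
        fun u hu => hz.pos u hu.1.le (hu.2.trans hx.2))
    · by_cases h : 0 ≤ x ∧ x < z
      · rw [if_pos h, max_eq_left h.1]
      · rw [if_neg h]; simp only [hf]; rw [if_neg h]
  refine iInf₂_le_of_le f hfm (iSup₂_le fun x hx => ?_)
  rcases lt_or_ge x z with hxz | hxz
  · exact (M.opI_inv_sol hx (fun u hu => hz.pos u hu.1.le (hu.2.trans hxz))
      (fun u hu => hfs u hu.1.le (hu.2.trans hxz)) (hev x ⟨hx.1, hxz⟩).deriv_eq).le
  · -- At `x = z` the function has a corner, where `deriv` takes its default value `0`; beyond `z` it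
    -- is locally constant.
    have hd : deriv f x = 0 := by
      by_cases hdf : DifferentiableAt ℝ f x
      · have h0 : ∀ y ∈ Ici x, f y = 0 := fun y hy => by
          simp only [hf]
          rw [if_neg fun h => absurd h.2 (not_lt.2 (hxz.trans hy))]
        have h1 : HasDerivWithinAt f 0 (Ici x) x :=
          (hasDerivWithinAt_const x (Ici x) (0:ℝ)).congr h0 (h0 x self_mem_Ici)
        exact (uniqueDiffWithinAt_Ici x).eq_deriv _ hdf.hasDerivAt.hasDerivWithinAt h1
      · exact deriv_zero_of_not_differentiableAt hdf
    have hA : ∫⁻ u in Set.Ioo 0 x, ENNReal.ofReal (f u) ∂(muM a b D) ≠ 0 := by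
      rw [M.mu_eq]
      refine (lt_of_lt_of_le ?_
        (lintegral_mono_set (Ioo_subset_Ioo_right hxz))).ne'
      rw [setLIntegral_congr_fun (g := fun u => ENNReal.ofReal (sol ρ s l u)) measurableSet_Ioo
        fun u hu => by simp only [hfs u hu.1.le hu.2]]
      rw [M.lint_inner (M.sol_cont l) hzp.le fun u hu => (hz.pos u hu.1.le hu.2).le]
      exact ENNReal.ofReal_pos.2 (M.inner_pos hz.mem fun u hu => hz.pos u hu.1.le hu.2)
    rw [opI_inv hA, hd]
    simp

/-- Duality between a positive solution `g` and a trial function `f` of the modified class, obtained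
by computing `∫ e^C g' f'` over the interval where `f` decreases in two ways. Recovering `f` from
`f'` gives `l ∫ f g dμ`; bounding `-f'` by `N e^{-C} ∫₀ˣ f dμ` and recovering `g` from `g'`, where
`g ≥ 0` at the right end is dropped, gives at most `N ∫ f g dμ`. -/
theorem le_iSup_FItil (M : Model a b D ρ s) {l : ℝ} (hl : 0 < l)
    (hpos : ∀ x ∈ ooI D, 0 < sol ρ s l x) {f : ℝ → ℝ} (hf : f ∈ FItil D) {N : ℝ≥0∞}
    (hN : ∀ x ∈ ooI D, (opI a b D f x)⁻¹ ≤ N) : ENNReal.ofReal l ≤ N := by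
  obtain ⟨p, q, hp0, hpq, hqD, hfc, hfd, hfd', hneg, hform⟩ := hf
  have hq : q ∈ ooI D := ⟨hp0.trans_lt hpq, hqD⟩
  have hfq : f q = 0 := by rw [hform]; simp
  have hanti : StrictAntiOn f (Icc p q) := by
    apply strictAntiOn_of_deriv_neg (convex_Icc _ _) hfc
    rw [interior_Icc]
    exact hneg
  have hfu : ∀ u ∈ Ioo 0 q, f u = f (max u p) := fun u hu => by
    conv_lhs => rw [hform]
    rw [if_pos ⟨hu.1.le, hu.2⟩]
  have hmx : ∀ u ∈ Ioo 0 q, max u p ∈ Icc p q := fun u hu =>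
    ⟨le_max_right _ _, max_le hu.2.le hpq.le⟩
  have hfle : ∀ u ∈ Ioo 0 q, f u ≤ f p := fun u hu => by
    rw [hfu u hu]
    exact hanti.antitoneOn ⟨le_rfl, hpq.le⟩ (hmx u hu) (le_max_right _ _)
  have hfge : ∀ x ∈ Ioo p q, ∀ u ∈ Ioo 0 x, f x ≤ f u := fun x hx u hu => by
    have hu' : u ∈ Ioo 0 q := ⟨hu.1, hu.2.trans hx.2⟩
    rw [hfu u hu']
    exact hanti.antitoneOn (hmx u hu') ⟨hx.1.le, hx.2.le⟩ (max_le hu.2.le hx.1.le)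
  have hfpos : ∀ x ∈ Ioo p q, 0 < f x := fun x hx => by
    rw [← hfq]
    exact hanti ⟨hx.1.le, hx.2.le⟩ ⟨hpq.le, le_rfl⟩ hx.2
  have hfmeas : Measurable f := by
    classical
    have h := ContinuousOn.measurable_piecewise (s := Ico 0 q) (f := fun x => f (max x p))
      (g := fun _ => (0:ℝ)) (hfc.comp (by fun_prop) fun x hx => ⟨le_max_right _ _,
        max_le hx.2.le hpq.le⟩) continuousOn_const measurableSet_Ico
    convert h using 1
    ext x
    rw [hform]
    by_cases hx : 0 ≤ x ∧ x < q
    · rw [if_pos hx, piecewise_eq_of_mem _ _ _ (show x ∈ Ico 0 q from hx)]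
    · rw [if_neg hx, piecewise_eq_of_notMem _ _ _ (show x ∉ Ico 0 q from hx)]
  set g := sol ρ s l with hg
  set m : ℝ → ℝ := fun x => ∫ u in (0:ℝ)..x, g u * ρ u with hm
  have hgc : Continuous g := M.sol_cont l
  have hmc : Continuous m := M.cont_inner hgc
  have hm0 : ∀ x, 0 < x → x ≤ q → 0 < m x := fun x h0 hx =>
    M.inner_pos (ooI_down hq h0 hx) fun u hu => hpos u (ooI_down hq hu.1 (hu.2.le.trans hx))
  have hgpos : ∀ x ∈ Ioo 0 q, 0 < g x := fun x hx => hpos x (ooI_down hq hx.1 hx.2.le)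
  have hganti := M.sol_antitone hl.le hgpos
  -- `F₁, F₂` are `g, f` on `(0,q)`, and `V₁, V₂` are `-f', -g'` on `(p,q)`. The pairings
  -- `∫ F₁ (∫_u V₁) dμ` and `∫ F₂ (∫_u V₂) dμ` are compared through Tonelli's theorem.
  set F₁ : ℝ → ℝ≥0∞ := (Ioo 0 q).indicator fun u => ENNReal.ofReal (g u) with hF₁
  set V₁ : ℝ → ℝ≥0∞ := (Ioo p q).indicator fun x => ENNReal.ofReal (-deriv f x) with hV₁
  set F₂ : ℝ → ℝ≥0∞ := (Ioo 0 q).indicator fun u => ENNReal.ofReal (f u) with hF₂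
  set V₂ : ℝ → ℝ≥0∞ := (Ioo p q).indicator fun x => ENNReal.ofReal (l * s x * m x) with hV₂
  have mF₁ : Measurable F₁ := hgc.measurable.ennreal_ofReal.indicator measurableSet_Ioo
  have mV₁ : Measurable V₁ := (measurable_deriv f).neg.ennreal_ofReal.indicator measurableSet_Ioo
  have mF₂ : Measurable F₂ := hfmeas.ennreal_ofReal.indicator measurableSet_Ioo
  have mV₂ : Measurable V₂ :=
    Measurable.indicator (((M.scont.measurable.const_mul l).mul hmc.measurable).ennreal_ofReal)
      measurableSet_Ioo
  set T := ∫⁻ u, F₁ u * F₂ u ∂(mu ρ) with hT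
  have hTi : T = ∫⁻ u in Ioo 0 q, ENNReal.ofReal (g u) * ENNReal.ofReal (f u) ∂(mu ρ) := by
    rw [hT, ← lintegral_indicator measurableSet_Ioo]
    congr 1
    ext u
    by_cases hu : u ∈ Ioo 0 q <;> simp [hF₁, hF₂, hu]
  have hr : (p + q) / 2 ∈ Ioo p q := ⟨by linarith, by linarith⟩
  have hg1 : ∀ u ∈ Ioo 0 q, g u ≤ 1 := fun u hu => by
    rw [← M.sol_zero l]
    exact hganti ⟨le_rfl, hq.1.le⟩ ⟨hu.1.le, hu.2.le⟩ hu.1.le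
  have hTfin : T ≠ ∞ := by
    rw [hTi]
    refine (M.lint_lt_top (f p) fun u hu => ?_).ne
    calc ENNReal.ofReal (g u) * ENNReal.ofReal (f u)
        ≤ ENNReal.ofReal 1 * ENNReal.ofReal (f p) := by
          gcongr
          · exact hg1 u hu
          · exact hfle u hu
      _ = _ := by simp
  have hTpos : T ≠ 0 := by
    rw [hTi]
    set r := (p + q) / 2
    have hr0 : 0 < r := hp0.trans_lt hr.1
    have gr : 0 < g r := hgpos r ⟨hr0, hr.2⟩
    refine (lt_of_lt_of_le ?_ (lintegral_mono_set (Ioo_subset_Ioo_right hr.2.le))).ne'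
    refine M.lint_pos (k := g r * f r) hr0
      (fun u hu => M.rpos u (ooI_down hq hu.1 (hu.2.trans hr.2).le)) (mul_pos gr (hfpos r hr))
      fun u hu => ?_
    rw [ENNReal.ofReal_mul gr.le]
    gcongr
    · exact hganti ⟨hu.1.le, (hu.2.trans hr.2).le⟩ ⟨hr0.le, hr.2.le⟩ hu.2.le
    · exact hfge r hr u hu
  have hI₁ : ∀ u, F₁ u * (∫⁻ x in Ioi u, V₁ x) = F₁ u * F₂ u := by
    intro u
    by_cases hu : u ∈ Ioo 0 q
    · congr 1
      rw [hV₁, lintegral_indicator measurableSet_Ioo, Measure.restrict_restrict measurableSet_Ioo,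
        Ioo_inter_Ioi, hF₂, indicator_of_mem hu, max_comm]
      have hm' := hmx u hu
      have := ftc_lintegral (f := f) (f' := deriv f) hm'.2
        (hfc.mono (Icc_subset_Icc_left hm'.1))
        (fun x hx => (hfd x ⟨hm'.1.trans_lt hx.1, hx.2⟩).hasDerivAt)
        (fun x hx => (hneg x ⟨hm'.1.trans_lt hx.1, hx.2⟩).le)
      rw [this, hfq, sub_zero, ← hfu u hu]
    · simp [hF₁, hu]
  have hI₂ : ∀ u, F₂ u * (∫⁻ x in Ioi u, V₂ x) ≤ F₁ u * F₂ u := by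
    intro u
    by_cases hu : u ∈ Ioo 0 q
    · rw [mul_comm]
      gcongr
      rw [hV₂, lintegral_indicator measurableSet_Ioo, Measure.restrict_restrict measurableSet_Ioo,
        Ioo_inter_Ioi, hF₁, indicator_of_mem hu, max_comm]
      have hm' := hmx u hu
      have hmp : 0 < max u p := lt_max_of_lt_left hu.1
      have := ftc_lintegral (f := g) (f' := fun x => -(l * s x * m x)) hm'.2 hgc.continuousOn
        (fun x hx => M.sol_hasDerivAt l x (hmp.trans hx.1)) (fun x hx => by
          have := hm0 x (hmp.trans hx.1) hx.2.le
          have := M.spos x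
          simp only [neg_nonpos]
          positivity)
      simp only [neg_neg] at this
      rw [this]
      apply ENNReal.ofReal_le_ofReal
      have h1 := hganti ⟨hu.1.le, hu.2.le⟩ ⟨hmp.le, hm'.2⟩ (le_max_left u p)
      have h2 := hpos q hq
      simp only [← hg] at h1 h2
      linarith
    · simp [hF₂, hu]
  have hpt : ∀ x, ENNReal.ofReal l * (V₁ x * ∫⁻ u in Ioo 0 x, F₁ u ∂(mu ρ)) ≤
      N * (V₂ x * ∫⁻ u in Ioo 0 x, F₂ u ∂(mu ρ)) := by
    intro x
    by_cases hx : x ∈ Ioo p q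
    swap
    · simp [hV₁, hx]
    have hx0 : 0 < x := hp0.trans_lt hx.1
    have hxD : x ∈ ooI D := ooI_down hq hx0 hx.2.le
    have e1 : ∫⁻ u in Ioo 0 x, F₁ u ∂(mu ρ) = ENNReal.ofReal (m x) := by
      rw [← M.lint_inner hgc hx0.le fun u hu => (hgpos u ⟨hu.1, hu.2.trans hx.2⟩).le]
      apply setLIntegral_congr_fun measurableSet_Ioo
      intro u hu
      simp only [hF₁]
      rw [indicator_of_mem (show u ∈ Ioo 0 q from ⟨hu.1, hu.2.trans hx.2⟩)]
    have e2 : ∫⁻ u in Ioo 0 x, F₂ u ∂(mu ρ) = ∫⁻ u in Ioo 0 x, ENNReal.ofReal (f u) ∂(mu ρ) := by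
      apply setLIntegral_congr_fun measurableSet_Ioo
      intro u hu
      simp only [hF₂]
      rw [indicator_of_mem (show u ∈ Ioo 0 q from ⟨hu.1, hu.2.trans hx.2⟩)]
    rw [e1, e2, hV₁, hV₂, indicator_of_mem hx, indicator_of_mem hx]
    have hA0 : 0 < ∫⁻ u in Ioo 0 x, ENNReal.ofReal (f u) ∂(mu ρ) :=
      M.lint_pos hx0 (fun u hu => M.rpos u (ooI_down hxD hu.1 hu.2.le)) (hfpos x hx)
        fun u hu => ENNReal.ofReal_le_ofReal (hfge x hx u hu)
    have hA1 : ∫⁻ u in Ioo 0 x, ENNReal.ofReal (f u) ∂(mu ρ) < ∞ :=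
      M.lint_lt_top (f p)
        fun u hu => ENNReal.ofReal_le_ofReal (hfle u ⟨hu.1, hu.2.trans hx.2⟩)
    have h1 := hN x hxD
    rw [opI_inv (by rw [M.mu_eq]; exact hA0.ne'), M.mu_eq, M.exp_neg x hxD] at h1
    set A := ∫⁻ u in Ioo 0 x, ENNReal.ofReal (f u) ∂(mu ρ)
    have hs := M.spos x
    have hmx0 := hm0 x hx0 hx.2.le
    rw [ENNReal.div_le_iff (mul_ne_zero (ENNReal.ofReal_pos.2 hs).ne' hA0.ne')
      (ENNReal.mul_ne_top ENNReal.ofReal_ne_top hA1.ne)] at h1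
    calc ENNReal.ofReal l * (ENNReal.ofReal (-deriv f x) * ENNReal.ofReal (m x))
        ≤ ENNReal.ofReal l * ((N * (ENNReal.ofReal (s x) * A)) * ENNReal.ofReal (m x)) := by gcongr
      _ = N * ((ENNReal.ofReal l * ENNReal.ofReal (s x) * ENNReal.ofReal (m x)) * A) := by ring
      _ = _ := by
        rw [ENNReal.ofReal_mul (by positivity), ENNReal.ofReal_mul hl.le]
  have hfinal : ENNReal.ofReal l * T ≤ N * T := by
    calc ENNReal.ofReal l * T
        = ENNReal.ofReal l * ∫⁻ x, V₁ x * ∫⁻ u in Ioo 0 x, F₁ u ∂(mu ρ) := by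
          rw [← M.tonelli mF₁ mV₁, lintegral_congr hI₁]
      _ ≤ ∫⁻ x, ENNReal.ofReal l * (V₁ x * ∫⁻ u in Ioo 0 x, F₁ u ∂(mu ρ)) :=
          lintegral_const_mul_le _ _
      _ ≤ ∫⁻ x, N * (V₂ x * ∫⁻ u in Ioo 0 x, F₂ u ∂(mu ρ)) := lintegral_mono hpt
      _ = N * ∫⁻ x, V₂ x * ∫⁻ u in Ioo 0 x, F₂ u ∂(mu ρ) := by
          rw [lintegral_const_mul'']
          refine (mV₂.mul ?_).aemeasurable
          exact Monotone.measurable fun x y hxy => lintegral_mono_set (Ioo_subset_Ioo_right hxy)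
      _ = N * ∫⁻ u, F₂ u * (∫⁻ x in Ioi u, V₂ x) ∂(mu ρ) := by rw [M.tonelli mF₂ mV₂]
      _ ≤ N * T := by
          gcongr
          exact lintegral_mono hI₂
  exact (ENNReal.mul_le_mul_iff_left hTpos hTfin).1 hfinal

/-- Below `λ₀` the solutions stay positive; at `λ₀` the limit is nonnegative, and a zero would be
an interior minimum with nonzero derivative. -/
theorem sol_lam0_pos (M : Model a b D ρ s) (hfin : lam0 a b D ≠ ∞)
    (h0 : 0 < (lam0 a b D).toReal) : ∀ x ∈ ooI D, 0 < sol ρ s (lam0 a b D).toReal x := by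
  set L := (lam0 a b D).toReal with hL
  have hLe : lam0 a b D = ENNReal.ofReal L := (ENNReal.ofReal_toReal hfin).symm
  have hgood : ∀ l ∈ Ioo 0 L, ∀ x ∈ ooI D, 0 < sol ρ s l x := by
    intro l hl x hx
    by_contra hcon
    obtain ⟨z, hz⟩ := M.exists_firstZero hx (not_lt.1 hcon)
    have := M.lam0_le_of_firstZero hl.1.le hz
    rw [hLe, ENNReal.ofReal_le_ofReal_iff hl.1.le] at this
    exact absurd hl.2 (not_lt.2 this)
  have hnn : ∀ x ∈ ooI D, 0 ≤ sol ρ s L x := by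
    intro x hx
    have ht : Tendsto (fun l => sol ρ s l x) (𝓝[<] L) (𝓝 (sol ρ s L x)) :=
      ((M.sol_cont_param x).tendsto L).mono_left nhdsWithin_le_nhds
    refine ge_of_tendsto ht ?_
    filter_upwards [Ioo_mem_nhdsLT h0] with l hl using (hgood l hl x hx).le
  intro x hx
  by_contra hcon
  obtain ⟨z, hz⟩ := M.exists_firstZero hx (not_lt.1 hcon)
  have hmin : IsLocalMin (sol ρ s L) z := by
    filter_upwards [(ooI_open D).mem_nhds hz.mem] with y hy
    rw [hz.zero]
    exact hnn y hy
  have hd := hmin.hasDerivAt_eq_zero (M.sol_hasDerivAt L z hz.mem.1)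
  have := mul_pos (mul_pos h0 (M.spos z)) (M.inner_pos hz.mem fun u hu => hz.pos u hu.1.le hu.2)
  linarith

end Model

/-- A member of `FI`, needed for attainment when `λ₀ = 0`. -/
theorem exp_mem_FI (D : ℝ≥0∞) : (fun x => Real.exp (-x)) ∈ FI D := by
  have hd : ∀ x : ℝ, HasDerivAt (fun x => Real.exp (-x)) (-Real.exp (-x)) x := fun x => by
    simpa using (hasDerivAt_neg x).exp
  have hd' : deriv (fun x => Real.exp (-x)) = fun x => -Real.exp (-x) := funext fun x => (hd x).deriv
  refine ⟨⟨by fun_prop, fun x _ => (hd x).differentiableAt, ?_⟩, fun x _ => Real.exp_pos _,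
    fun x _ => ?_⟩
  · rw [hd']; fun_prop
  · rw [hd']; exact neg_lt_zero.2 (Real.exp_pos _)

/-! ### The variational formulas -/

/-- Theorem 2.1(1): single-integral variational formulas for the ND principal
eigenvalue, with attainment of the supremum. -/
theorem nd_single_integral_variational_formula
    (a b : ℝ → ℝ) (D : ℝ≥0∞) (hD : 0 < D) (hyp : Hyp a b D) :
    (⨅ f ∈ FItil D, ⨆ x ∈ ooI D, (opI a b D f x)⁻¹) = lam0 a b D ∧
    (⨆ f ∈ FI D, ⨅ x ∈ ooI D, (opI a b D f x)⁻¹) = lam0 a b D ∧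
    ∃ f ∈ FI D, (⨅ x ∈ ooI D, (opI a b D f x)⁻¹) = lam0 a b D := by
  obtain ⟨ρ, s, M⟩ := exists_model hyp
  have hfin := M.lam0_ne_top hD
  set L := (lam0 a b D).toReal with hL
  have hLe : lam0 a b D = ENNReal.ofReal L := (ENNReal.ofReal_toReal hfin).symm
  have hlow : ∀ f ∈ FI D, (⨅ x ∈ ooI D, (opI a b D f x)⁻¹) ≤ lam0 a b D := fun f hf =>
    M.lower hf fun x hx => iInf₂_le x hx
  have hatt : ∃ f ∈ FI D, (⨅ x ∈ ooI D, (opI a b D f x)⁻¹) = lam0 a b D := by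
    -- For `λ₀ = 0` the solution is the constant `1`, which is not strictly decreasing; any member
    -- of `FI` attains the supremum then.
    rcases ENNReal.toReal_nonneg.eq_or_lt with h0 | h0
    · refine ⟨_, exp_mem_FI D, le_antisymm (hlow _ (exp_mem_FI D)) ?_⟩
      rw [hLe, hL, ← h0]
      simp
    · have hpos := M.sol_lam0_pos hfin h0
      refine ⟨_, M.sol_mem_FI h0 hpos, le_antisymm (hlow _ (M.sol_mem_FI h0 hpos)) ?_⟩
      refine le_iInf₂ fun x hx => ?_
      rw [M.opI_inv_sol hx (fun u hu => hpos u (ooI_down hx hu.1 hu.2.le))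
        (fun _ _ => rfl) rfl, ← hL, ← hLe]
  refine ⟨le_antisymm ?_ ?_, le_antisymm (iSup₂_le hlow) ?_, hatt⟩
  · refine ENNReal.le_of_forall_pos_le_add fun ε hε _ => ?_
    have hl : 0 < L + ε := add_pos_of_nonneg_of_pos ENNReal.toReal_nonneg hε
    -- For `l > λ₀` the solution must vanish somewhere, since a positive one would be a member of
    -- `FI` proving `l ≤ λ₀`.
    have hbad : ∃ z, FirstZero D ρ s (L + ε) z := by
      by_contra hcon
      have hpos : ∀ x ∈ ooI D, 0 < sol ρ s (L + ε) x := fun x hx => by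
        by_contra h
        exact hcon (M.exists_firstZero hx (not_lt.1 h))
      have h1 : ENNReal.ofReal (L + ε) ≤ lam0 a b D :=
        M.lower (M.sol_mem_FI hl hpos) fun x hx =>
          (M.opI_inv_sol hx (fun u hu => hpos u (ooI_down hx hu.1 hu.2.le))
            (fun _ _ => rfl) rfl).ge
      rw [hLe, ENNReal.ofReal_le_ofReal_iff ENNReal.toReal_nonneg] at h1
      have : (0:ℝ) < ε := hε
      linarith
    obtain ⟨z, hz⟩ := hbad
    refine (M.iInf_FItil_le hl hz).trans ?_
    rw [hLe, ENNReal.ofReal_add (show 0 ≤ L from ENNReal.toReal_nonneg) ε.coe_nonneg, ENNReal.ofReal_coe_nnreal]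
  · refine le_iInf₂ fun f hf => ?_
    rcases ENNReal.toReal_nonneg.eq_or_lt with h0 | h0
    · rw [hLe, hL, ← h0]
      simp
    · rw [hLe]
      exact M.le_iSup_FItil h0 (M.sol_lam0_pos hfin h0) hf fun x hx =>
        le_iSup₂ (f := fun x (_ : x ∈ ooI D) => (opI a b D f x)⁻¹) x hx
  · obtain ⟨f, hf, he⟩ := hatt
    rw [← he]
    exact le_iSup₂ (f := fun f (_ : f ∈ FI D) => ⨅ x ∈ ooI D, (opI a b D f x)⁻¹) f hf
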